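/- Let 𝔉 = g(A_F) with A_F = [[2,−2,0],[−2,2,−1],[0,−1,2]]. Writing (a,b,c) for the root α = aα₁ + bα₂ + cα₃, the following root multiplicities hold: mult(7,7,2) = 56, mult(8,10,4) = 792, mult(10,10,5) = 2434, mult(11,11,5) = 6826, and mult(11,14,7) = 44258. (These roots satisfy −(α|α)/2 = 10, 20, 25, 30, 40 respectively.) -/

import Mathlib

/-! Serre presentation of the Kac–Moody Lie algebra `g(A)` of a generalized Cartan
matrix `A`. -/

/-- Generators `e i`, `f i`, `h i` of the Serre presentation. -/
inductive ChevalleyGen (ℓ : ℕ) : Type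
  | e : Fin ℓ → ChevalleyGen ℓ
  | f : Fin ℓ → ChevalleyGen ℓ
  | h : Fin ℓ → ChevalleyGen ℓ

namespace KacMoody

variable {ℓ : ℕ}

/-- The free Lie algebra over `ℂ` on the generators. -/
abbrev FreeLie (ℓ : ℕ) : Type := FreeLieAlgebra ℂ (ChevalleyGen ℓ)

noncomputable def E (i : Fin ℓ) : FreeLie ℓ := FreeLieAlgebra.of ℂ (ChevalleyGen.e i)
noncomputable def F (i : Fin ℓ) : FreeLie ℓ := FreeLieAlgebra.of ℂ (ChevalleyGen.f i)
noncomputable def H (i : Fin ℓ) : FreeLie ℓ := FreeLieAlgebra.of ℂ (ChevalleyGen.h i)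

open LieAlgebra in
/-- The defining relations of the Serre presentation: `⁅h i, h j⁆ = 0`,
`⁅e i, f j⁆ = δ_{ij} h i`, `⁅h i, e j⁆ = A i j • e j`, `⁅h i, f j⁆ = −A i j • f j`, and the
Serre relations `(ad (e i))^(1 − A i j) (e j) = 0`, `(ad (f i))^(1 − A i j) (f j) = 0` for
`i ≠ j`. -/
noncomputable def serreRelations (A : Matrix (Fin ℓ) (Fin ℓ) ℤ) : Set (FreeLie ℓ) :=
  {x : FreeLie ℓ | ∃ i j : Fin ℓ, x = ⁅H i, H j⁆} ∪
  {x : FreeLie ℓ | ∃ i j : Fin ℓ, x = ⁅E i, F j⁆ - if i = j then H i else 0} ∪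
  {x : FreeLie ℓ | ∃ i j : Fin ℓ, x = ⁅H i, E j⁆ - (A i j : ℂ) • E j} ∪
  {x : FreeLie ℓ | ∃ i j : Fin ℓ, x = ⁅H i, F j⁆ + (A i j : ℂ) • F j} ∪
  {x : FreeLie ℓ | ∃ i j : Fin ℓ, i ≠ j ∧ x = ((ad ℂ (FreeLie ℓ) (E i)) ^ (1 - A i j).toNat) (E j)} ∪
  {x : FreeLie ℓ | ∃ i j : Fin ℓ, i ≠ j ∧ x = ((ad ℂ (FreeLie ℓ) (F i)) ^ (1 - A i j).toNat) (F j)}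

/-- The Lie ideal of the free Lie algebra generated by the Serre relations. -/
noncomputable def serreIdeal (A : Matrix (Fin ℓ) (Fin ℓ) ℤ) : LieIdeal ℂ (FreeLie ℓ) :=
  LieSubmodule.lieSpan ℂ (FreeLie ℓ) (serreRelations A)

/-- The Serre-presented Lie algebra `g(A)` of a generalized Cartan matrix `A`: the quotient
of the free Lie algebra on the generators `e i`, `f i`, `h i` by the ideal generated by
the defining relations. -/
abbrev gA (A : Matrix (Fin ℓ) (Fin ℓ) ℤ) : Type := FreeLie ℓ ⧸ serreIdeal A

/-- The image of `h i` in `g(A)`. -/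
noncomputable def Hbar (A : Matrix (Fin ℓ) (Fin ℓ) ℤ) (i : Fin ℓ) : gA A :=
  LieSubmodule.Quotient.mk' (serreIdeal A) (H i)

open LieAlgebra in
/-- The root space `g_α` for `α = ∑ c i • α i`: all `x` with
`⁅h i, x⁆ = (∑ j, A i j * c j) • x` for every `i`. -/
noncomputable def rootSpace (A : Matrix (Fin ℓ) (Fin ℓ) ℤ) (c : Fin ℓ → ℤ) :
    Submodule ℂ (gA A) :=
  ⨅ i : Fin ℓ, Module.End.eigenspace (ad ℂ (gA A) (Hbar A i)) ((∑ j, A i j * c j : ℤ) : ℂ)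

/-- The multiplicity of the root `α = ∑ c i • α i`: the dimension of `g_α`. -/
noncomputable def mult (A : Matrix (Fin ℓ) (Fin ℓ) ℤ) (c : Fin ℓ → ℤ) : ℕ :=
  Module.finrank ℂ (rootSpace A c)

end KacMoody

/-- The generalized Cartan matrix of the rank 3 hyperbolic Kac–Moody algebra `𝔉` of type
`HA₁⁽¹⁾`. -/
def AF : Matrix (Fin 3) (Fin 3) ℤ := !![2, -2, 0; -2, 2, -1; 0, -1, 2]

/-!
The standard Lie bialgebra structure of `g(A)` gives a cobracket `δ`, a derivation into
`g(A) ⊗ g(A)` with `δ eᵢ = hᵢ ∧ eᵢ`. Put `δ_α x = δ x - h_α ∧ x` for `x ∈ g_α`. Then `δ_α eᵢ = 0`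
for `α = αᵢ`, so on a positive root space `δ_α` takes values in the sum of all `g_β ⊗ g_γ` with
`β, γ > 0` and `β + γ = α`, and by induction on brackets the composition of `δ_α` with the bracket
`g(A) ⊗ g(A) → g(A)` is the scalar `4 ht α - 2 (α|α)` on `g_α`. Taking traces,
`(4 ht α - 2 (α|α)) mult α` is the sum over `β + γ = α` of the traces `t(β, γ)` of the opposite
composition on `g_β ⊗ g_γ`, and the derivation property of `δ` reduces these to smaller roots:
`t(β, γ) = -2 (β|γ) (mult β mult γ - [β = γ] mult β) + t(β, γ - β) + t(γ, β - γ)`. Reflections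
show that `(α|α) ≤ 2` if `g_α ≠ 0`, hence the scalar is positive when `ht α > 1`, and all
multiplicities are determined recursively. For `𝔉` the recursion is checked against a table of
multiplicities by evaluation in the kernel.
-/

/-! ### The presentation of `g(A)` -/

namespace KacMoody

section Presentation

variable {ℓ : ℕ} {L L' : Type*} [LieRing L] [LieAlgebra ℂ L] [LieRing L'] [LieAlgebra ℂ L']

/-- A symmetric generalized Cartan matrix. -/
structure IsSymmetricGCM (A : Matrix (Fin ℓ) (Fin ℓ) ℤ) : Prop where
  diag : ∀ i, A i i = 2
  nonpos : ∀ i j, i ≠ j → A i j ≤ 0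
  symm : ∀ i j, A i j = A j i

/-- The Chevalley relations of a Kac–Moody algebra, that is, its defining relations without the
Serre relations. -/
structure ChevalleyRelations (A : Matrix (Fin ℓ) (Fin ℓ) ℤ) (e f h : Fin ℓ → L) : Prop where
  lie_h_h : ∀ i j, ⁅h i, h j⁆ = 0
  lie_e_f : ∀ i j, ⁅e i, f j⁆ = if i = j then h i else 0
  lie_h_e : ∀ i j, ⁅h i, e j⁆ = (A i j : ℂ) • e j
  lie_h_f : ∀ i j, ⁅h i, f j⁆ = -((A i j : ℂ) • f j)

/-- The Serre relations for one of the two families of Chevalley generators. -/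
def SerreRelations (A : Matrix (Fin ℓ) (Fin ℓ) ℤ) (x : Fin ℓ → L) : Prop :=
  ∀ i j, i ≠ j → (LieAlgebra.ad ℂ L (x i) ^ (1 - A i j).toNat) (x j) = 0

theorem ad_pow_succ_apply (x y : L) (n : ℕ) :
    (LieAlgebra.ad ℂ L x ^ (n + 1)) y = ⁅x, (LieAlgebra.ad ℂ L x ^ n) y⁆ := by
  rw [pow_succ', Module.End.mul_apply, LieAlgebra.ad_apply]

theorem map_ad_pow (φ : L →ₗ⁅ℂ⁆ L') (x y : L) (n : ℕ) :
    φ ((LieAlgebra.ad ℂ L x ^ n) y) = (LieAlgebra.ad ℂ L' (φ x) ^ n) (φ y) := by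
  induction n with
  | zero => rfl
  | succ n ih => rw [ad_pow_succ_apply, LieHom.map_lie, ih, ad_pow_succ_apply]

theorem lie_ad_pow_succ (x y z : L) (n : ℕ) :
    ⁅x, (LieAlgebra.ad ℂ L y ^ (n + 1)) z⁆ =
      ⁅⁅x, y⁆, (LieAlgebra.ad ℂ L y ^ n) z⁆ + ⁅y, ⁅x, (LieAlgebra.ad ℂ L y ^ n) z⁆⁆ := by
  rw [ad_pow_succ_apply, leibniz_lie]

theorem lie_ad_pow_of_lie_eq_zero {x y : L} (hxy : ⁅x, y⁆ = 0) (z : L) (n : ℕ) :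
    ⁅x, (LieAlgebra.ad ℂ L y ^ n) z⁆ = (LieAlgebra.ad ℂ L y ^ n) ⁅x, z⁆ := by
  induction n with
  | zero => rfl
  | succ n ih => rw [lie_ad_pow_succ, hxy, zero_lie, zero_add, ih, ad_pow_succ_apply]

theorem lie_ad_pow_of_lie_eq_smul {x y z : L} {a b : ℂ} (hxy : ⁅x, y⁆ = a • y)
    (hxz : ⁅x, z⁆ = b • z) (n : ℕ) :
    ⁅x, (LieAlgebra.ad ℂ L y ^ n) z⁆ = (n * a + b) • (LieAlgebra.ad ℂ L y ^ n) z := by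
  induction n with
  | zero => simpa using hxz
  | succ n ih =>
    rw [lie_ad_pow_succ, ih, hxy, lie_smul, smul_lie, ← ad_pow_succ_apply]
    push_cast
    module

namespace ChevalleyRelations

variable {A : Matrix (Fin ℓ) (Fin ℓ) ℤ} {e f h : Fin ℓ → L} (H : ChevalleyRelations A e f h)

include H

/-- The Chevalley involution. -/
theorem swap : ChevalleyRelations A f e (fun i => -h i) where
  lie_h_h i j := by simp [H.lie_h_h]
  lie_e_f i j := by
    rw [← lie_skew, H.lie_e_f]
    by_cases hij : i = j
    · simp [hij]
    · simp [hij, Ne.symm hij]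
  lie_h_e i j := by simp [H.lie_h_f]
  lie_h_f i j := by simp [H.lie_h_e]

theorem lie_e_ad_f_pow_succ (hA : IsSymmetricGCM A) {i j : Fin ℓ} (hij : i ≠ j) (n : ℕ) :
    ⁅e i, (LieAlgebra.ad ℂ L (f i) ^ (n + 1)) (f j)⁆ =
      (-((n + 1) * (n + A i j)) : ℂ) • (LieAlgebra.ad ℂ L (f i) ^ n) (f j) := by
  induction n with
  | zero => rw [lie_ad_pow_succ]; simp [H.lie_e_f, H.lie_h_f, hij]
  | succ n ih =>
    have hh := lie_ad_pow_of_lie_eq_smul (by rw [H.lie_h_f i i, ← neg_smul])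
      (by rw [H.lie_h_f i j, ← neg_smul]) (n + 1)
    rw [lie_ad_pow_succ, ih, H.lie_e_f, if_pos rfl, hh, lie_smul, ← ad_pow_succ_apply, hA.diag]
    push_cast
    module

theorem lie_e_serre_f (hA : IsSymmetricGCM A) {i j : Fin ℓ} (hij : i ≠ j) (k : Fin ℓ) :
    ⁅e k, (LieAlgebra.ad ℂ L (f i) ^ (1 - A i j).toNat) (f j)⁆ = 0 := by
  obtain ⟨n, hn⟩ : ∃ n : ℕ, A i j = -n := ⟨(A i j).natAbs, by have := hA.nonpos i j hij; omega⟩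
  have hexp : (1 - A i j).toNat = n + 1 := by omega
  rw [hexp]
  rcases eq_or_ne k i with rfl | hki
  · rw [H.lie_e_ad_f_pow_succ hA hij, hn]
    push_cast
    simp
  rw [lie_ad_pow_of_lie_eq_zero (by rw [H.lie_e_f, if_neg hki]), H.lie_e_f]
  rcases eq_or_ne k j with rfl | hkj
  · have hfh : ⁅f i, h k⁆ = (A i k : ℂ) • f i := by
      rw [← lie_skew, H.lie_h_f, neg_neg, hA.symm k i]
    rw [if_pos rfl, pow_succ, Module.End.mul_apply, LieAlgebra.ad_apply, hfh, hn]
    cases n with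
    | zero => simp
    | succ n => simp [pow_succ]
  · rw [if_neg hkj, map_zero]

theorem lie_f_serre_e (hA : IsSymmetricGCM A) {i j : Fin ℓ} (hij : i ≠ j) (k : Fin ℓ) :
    ⁅f k, (LieAlgebra.ad ℂ L (e i) ^ (1 - A i j).toNat) (e j)⁆ = 0 :=
  H.swap.lie_e_serre_f hA hij k

end ChevalleyRelations

variable (A : Matrix (Fin ℓ) (Fin ℓ) ℤ)

/-- The projection of the free Lie algebra onto `g(A)`, as a homomorphism of Lie algebras. -/
noncomputable def proj : FreeLie ℓ →ₗ⁅ℂ⁆ gA A :=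
  { (LieSubmodule.Quotient.mk' (serreIdeal A) : FreeLie ℓ →ₗ[ℂ] gA A) with
    map_lie' := fun {x y} => LieSubmodule.Quotient.mk_bracket _ x y }

/-- The image of `e i` in `g(A)`. -/
noncomputable def Ebar (i : Fin ℓ) : gA A := proj A (E i)

/-- The image of `f i` in `g(A)`. -/
noncomputable def Fbar (i : Fin ℓ) : gA A := proj A (F i)

theorem proj_surjective : Function.Surjective (proj A) :=
  LieSubmodule.Quotient.surjective_mk' _

theorem proj_eq_zero_of_mem {x : FreeLie ℓ} (hx : x ∈ serreRelations A) : proj A x = 0 :=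
  (LieSubmodule.Quotient.mk_eq_zero _).2 (LieSubmodule.subset_lieSpan hx)

theorem chevalleyRelations_gA : ChevalleyRelations A (Ebar A) (Fbar A) (Hbar A) where
  lie_h_h i j := by
    have hx : ⁅H i, H j⁆ ∈ serreRelations A :=
      .inl (.inl (.inl (.inl (.inl ⟨i, j, rfl⟩))))
    exact (LieHom.map_lie _ _ _).symm.trans (proj_eq_zero_of_mem A hx)
  lie_e_f i j := by
    have hx : ⁅E i, F j⁆ - (if i = j then H i else 0) ∈ serreRelations A :=
      .inl (.inl (.inl (.inl (.inr ⟨i, j, rfl⟩))))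
    have := proj_eq_zero_of_mem A hx
    rwa [map_sub, LieHom.map_lie, sub_eq_zero, apply_ite (proj A), map_zero] at this
  lie_h_e i j := by
    have hx : ⁅H i, E j⁆ - (A i j : ℂ) • E j ∈ serreRelations A :=
      .inl (.inl (.inl (.inr ⟨i, j, rfl⟩)))
    have := proj_eq_zero_of_mem A hx
    rwa [map_sub, LieHom.map_lie, sub_eq_zero, map_smul] at this
  lie_h_f i j := by
    have hx : ⁅H i, F j⁆ + (A i j : ℂ) • F j ∈ serreRelations A :=
      .inl (.inl (.inr ⟨i, j, rfl⟩))
    have := proj_eq_zero_of_mem A hx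
    rw [map_add, LieHom.map_lie, map_smul] at this
    exact eq_neg_of_add_eq_zero_left this

theorem serreRelations_Ebar : SerreRelations A (Ebar A) := fun i j hij =>
  (map_ad_pow _ _ _ _).symm.trans <|
    proj_eq_zero_of_mem A (.inl (.inr ⟨i, j, hij, rfl⟩))

theorem serreRelations_Fbar : SerreRelations A (Fbar A) := fun i j hij =>
  (map_ad_pow _ _ _ _).symm.trans <|
    proj_eq_zero_of_mem A (.inr ⟨i, j, hij, rfl⟩)

variable {A}

/-- The assignment of the elements `e i`, `f i`, `h i` to the Chevalley generators. -/
def generatorMap {X : Type*} (e f h : Fin ℓ → X) : ChevalleyGen ℓ → X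
  | .e i => e i
  | .f i => f i
  | .h i => h i

theorem serreIdeal_le_ker_lift {e f h : Fin ℓ → L} (hc : ChevalleyRelations A e f h)
    (he : SerreRelations A e) (hf : SerreRelations A f) :
    serreIdeal A ≤ (FreeLieAlgebra.lift ℂ (generatorMap e f h)).ker := by
  set ψ : FreeLie ℓ →ₗ⁅ℂ⁆ L := FreeLieAlgebra.lift ℂ (generatorMap e f h)
  have hE (i) : ψ (E i) = e i := FreeLieAlgebra.lift_of_apply ..
  have hF (i) : ψ (F i) = f i := FreeLieAlgebra.lift_of_apply ..
  have hH (i) : ψ (H i) = h i := FreeLieAlgebra.lift_of_apply ..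
  refine LieSubmodule.lieSpan_le.2 fun x hx => ?_
  rw [SetLike.mem_coe, LieHom.mem_ker]
  rcases hx with ((((⟨i, j, rfl⟩ | ⟨i, j, rfl⟩) | ⟨i, j, rfl⟩) | ⟨i, j, rfl⟩) |
    ⟨i, j, hij, rfl⟩) | ⟨i, j, hij, rfl⟩
  · rw [LieHom.map_lie, hH, hH, hc.lie_h_h]
  · rw [map_sub, LieHom.map_lie, hE, hF, hc.lie_e_f, apply_ite ψ, hH, map_zero, sub_self]
  · rw [map_sub, LieHom.map_lie, map_smul, hH, hE, hc.lie_h_e, sub_self]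
  · rw [map_add, LieHom.map_lie, map_smul, hH, hF, hc.lie_h_f, neg_add_cancel]
  · rw [map_ad_pow, hE, hE, he i j hij]
  · rw [map_ad_pow, hF, hF, hf i j hij]

section lift

variable {e f h : Fin ℓ → L} (hc : ChevalleyRelations A e f h) (he : SerreRelations A e)
  (hf : SerreRelations A f)

/-- The universal property of `g(A)`: elements satisfying the defining relations extend to a
homomorphism. -/
noncomputable def lift : gA A →ₗ⁅ℂ⁆ L :=
  { (serreIdeal A).toSubmodule.liftQ
      (FreeLieAlgebra.lift ℂ (generatorMap e f h) : FreeLie ℓ →ₗ[ℂ] L)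
      (serreIdeal_le_ker_lift hc he hf) with
    map_lie' := fun {x y} => by
      obtain ⟨x, rfl⟩ := proj_surjective A x
      obtain ⟨y, rfl⟩ := proj_surjective A y
      exact LieHom.map_lie (FreeLieAlgebra.lift ℂ (generatorMap e f h)) x y }

theorem lift_Ebar (i : Fin ℓ) : lift hc he hf (Ebar A i) = e i :=
  FreeLieAlgebra.lift_of_apply ..

theorem lift_Fbar (i : Fin ℓ) : lift hc he hf (Fbar A i) = f i :=
  FreeLieAlgebra.lift_of_apply ..

theorem lift_Hbar (i : Fin ℓ) : lift hc he hf (Hbar A i) = h i :=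
  FreeLieAlgebra.lift_of_apply ..

end lift

theorem eq_top_of_generators_mem {K : LieSubalgebra ℂ (gA A)} (he : ∀ i, Ebar A i ∈ K)
    (hf : ∀ i, Fbar A i ∈ K) (hh : ∀ i, Hbar A i ∈ K) : K = ⊤ := by
  let ψ : FreeLie ℓ →ₗ⁅ℂ⁆ K := FreeLieAlgebra.lift ℂ
    (generatorMap (fun i => ⟨_, he i⟩) (fun i => ⟨_, hf i⟩) (fun i => ⟨_, hh i⟩))
  have hψ : K.incl.comp ψ = proj A := by
    refine FreeLieAlgebra.hom_ext fun g => ?_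
    cases g <;> simp [ψ, generatorMap] <;> rfl
  refine eq_top_iff.2 fun x _ => ?_
  obtain ⟨x, rfl⟩ := proj_surjective A x
  exact hψ ▸ (ψ x).2

end Presentation

end KacMoody

/-! ### A module on which the Cartan elements act non-trivially -/

namespace KacMoody

attribute [local instance] LieRing.ofAssociativeRing

section LowestWeight

variable {ℓ : ℕ} {A : Matrix (Fin ℓ) (Fin ℓ) ℤ} {V : Type*} [AddCommGroup V] [Module ℂ V]

theorem ad_pow_apply_eq_zero {x y : Module.End ℂ V} {v : V} (hx : x v = 0) (hy : y v = 0) (n : ℕ) :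
    (LieAlgebra.ad ℂ (Module.End ℂ V) x ^ n) y v = 0 := by
  induction n with
  | zero => exact hy
  | succ n ih => simp [ad_pow_succ_apply, Ring.lie_def, hx, ih]

/-- The subspace generated by a vector under products of the operators `f i`. -/
def wordSpan (f : Fin ℓ → Module.End ℂ V) (v : V) : Submodule ℂ V :=
  Submodule.span ℂ (Set.range fun w : List (Fin ℓ) => (w.map f).prod v)

variable {e f h : Fin ℓ → Module.End ℂ V} {v : V}

theorem mem_wordSpan_self : v ∈ wordSpan f v :=
  Submodule.subset_span ⟨[], rfl⟩

theorem apply_mem_wordSpan {x : V} (hx : x ∈ wordSpan f v) (i : Fin ℓ) : f i x ∈ wordSpan f v := by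
  induction hx using Submodule.span_induction with
  | mem x hx =>
    obtain ⟨w, rfl⟩ := hx
    exact Submodule.subset_span ⟨i :: w, by simp⟩
  | zero => simp
  | add x y _ _ hx hy => simpa using add_mem hx hy
  | smul c x _ hx => simpa using Submodule.smul_mem _ c hx

theorem wordSpan_le {N : Submodule ℂ V} (hv : v ∈ N) (hN : ∀ i, ∀ x ∈ N, f i x ∈ N) :
    wordSpan f v ≤ N := by
  refine Submodule.span_le.2 ?_
  rintro _ ⟨w, rfl⟩
  induction w with
  | nil => exact hv
  | cons i w ih => simpa using hN i _ ih

theorem ChevalleyRelations.e_h_mem_wordSpan (H : ChevalleyRelations A e f h) (he : ∀ i, e i v = 0)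
    {c : Fin ℓ → ℂ} (hh : ∀ i, h i v = c i • v) {x : V} (hx : x ∈ wordSpan f v) (i : Fin ℓ) :
    e i x ∈ wordSpan f v ∧ h i x ∈ wordSpan f v := by
  suffices hle : wordSpan f v ≤ wordSpan f v ⊓
      ⨅ k, (wordSpan f v).comap (e k) ⊓ (wordSpan f v).comap (h k) by
    simpa using ((Submodule.mem_iInf _).1 (hle hx).2 i)
  refine wordSpan_le ⟨mem_wordSpan_self, (Submodule.mem_iInf _).2 fun k => ?_⟩ fun j x hx =>
    ⟨apply_mem_wordSpan hx.1 j, (Submodule.mem_iInf _).2 fun k => ?_⟩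
  · exact ⟨by simp [he], by simpa [hh] using Submodule.smul_mem _ _ mem_wordSpan_self⟩
  · obtain ⟨hek, hhk⟩ := (Submodule.mem_iInf _).1 hx.2 k
    have hef := congr($(H.lie_e_f k j) x)
    have hhf := congr($(H.lie_h_f k j) x)
    rw [Ring.lie_def, LinearMap.sub_apply, sub_eq_iff_eq_add, Module.End.mul_apply] at hef hhf
    constructor
    · change e k (f j x) ∈ wordSpan f v
      rw [hef]
      refine add_mem ?_ (apply_mem_wordSpan hek j)
      split_ifs
      exacts [(Submodule.mem_iInf _).1 hx.2 k |>.2, zero_mem _]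
    · change h k (f j x) ∈ wordSpan f v
      rw [hhf]
      exact add_mem (neg_mem (Submodule.smul_mem _ _ (apply_mem_wordSpan hx.1 j)))
        (apply_mem_wordSpan hhk j)

/- The element `(ad (e i))^(1 - A i j) (e j)` commutes with every `f k` and kills `v`. -/
theorem ChevalleyRelations.serreRelations_of_wordSpan_eq_top (H : ChevalleyRelations A e f h)
    (hA : IsSymmetricGCM A) (he : ∀ i, e i v = 0) (hv : wordSpan f v = ⊤) :
    SerreRelations A e := by
  intro i j hij
  set θ := (LieAlgebra.ad ℂ (Module.End ℂ V) (e i) ^ (1 - A i j).toNat) (e j)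
  rw [← LinearMap.ker_eq_top, eq_top_iff, ← hv]
  refine wordSpan_le (ad_pow_apply_eq_zero (he i) (he j) _) fun k x hx => ?_
  have hcomm : f k * θ = θ * f k := sub_eq_zero.1 (H.lie_f_serre_e hA hij k)
  calc θ (f k x) = f k (θ x) := congr($hcomm.symm x)
    _ = 0 := by rw [LinearMap.mem_ker.1 hx, map_zero]

theorem coe_ad_pow_restrict {N : Submodule ℂ V} {x y : Module.End ℂ V} (hx : ∀ v ∈ N, x v ∈ N)
    (hy : ∀ v ∈ N, y v ∈ N) (n : ℕ) (v : N) :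
    ((LieAlgebra.ad ℂ _ (x.restrict hx) ^ n) (y.restrict hy) v : V) =
      (LieAlgebra.ad ℂ _ x ^ n) y v := by
  induction n generalizing v with
  | zero => rfl
  | succ n ih =>
    rw [ad_pow_succ_apply, ad_pow_succ_apply, Ring.lie_def, Ring.lie_def]
    simp [ih]

theorem SerreRelations.restrict {N : Submodule ℂ V} (hs : SerreRelations A f)
    (hN : ∀ i, ∀ v ∈ N, f i v ∈ N) : SerreRelations A fun i => (f i).restrict (hN i) :=
  fun i j hij => LinearMap.ext fun v => Subtype.ext <|
    (coe_ad_pow_restrict (hN i) (hN j) _ v).trans congr($(hs i j hij) (v : V))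

theorem ChevalleyRelations.restrict {N : Submodule ℂ V} (H : ChevalleyRelations A e f h)
    (he : ∀ i, ∀ v ∈ N, e i v ∈ N) (hf : ∀ i, ∀ v ∈ N, f i v ∈ N) (hh : ∀ i, ∀ v ∈ N, h i v ∈ N) :
    ChevalleyRelations A (fun i => (e i).restrict (he i)) (fun i => (f i).restrict (hf i))
      (fun i => (h i).restrict (hh i)) where
  lie_h_h i j := LinearMap.ext fun v => Subtype.ext congr($(H.lie_h_h i j) (v : V))
  lie_e_f i j := LinearMap.ext fun v => Subtype.ext <|
    congr($(H.lie_e_f i j) (v : V)).trans (by split_ifs <;> rfl)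
  lie_h_e i j := LinearMap.ext fun v => Subtype.ext congr($(H.lie_h_e i j) (v : V))
  lie_h_f i j := LinearMap.ext fun v => Subtype.ext congr($(H.lie_h_f i j) (v : V))

theorem coe_prod_map_restrict {N : Submodule ℂ V} (hf : ∀ i, ∀ x ∈ N, f i x ∈ N) (v : N)
    (w : List (Fin ℓ)) :
    ((w.map fun i => (f i).restrict (hf i)).prod v : V) = (w.map f).prod v := by
  induction w with
  | nil => rfl
  | cons i w ih => simp [ih]

theorem wordSpan_restrict_wordSpan (f : Fin ℓ → Module.End ℂ V) (v : V) :
    wordSpan (fun i => (f i).restrict fun _ hx => apply_mem_wordSpan hx i)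
      ⟨v, mem_wordSpan_self⟩ = ⊤ := by
  refine Submodule.map_injective_of_injective (wordSpan f v).injective_subtype ?_
  rw [Submodule.map_subtype_top]
  refine (Submodule.map_span _ _).trans ?_
  rw [← Set.range_comp]
  exact congrArg (fun g => Submodule.span ℂ (Set.range g)) <|
    funext fun w => coe_prod_map_restrict _ _ w

end LowestWeight

section Coinduced

variable {ℓ : ℕ} (A : Matrix (Fin ℓ) (Fin ℓ) ℤ)

/-- The weight of `h i` on a word `w`, normalized to be `1` on the empty word. -/
def wordWeight (i : Fin ℓ) (w : List (Fin ℓ)) : ℂ :=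
  1 - ((w.map (A i)).sum : ℤ)

/-- The action of `e i` on functions on words. -/
def coE (i : Fin ℓ) : Module.End ℂ (List (Fin ℓ) → ℂ) :=
  LinearMap.funLeft ℂ ℂ (List.cons i)

/-- The action of `h i` on functions on words. -/
def coH (i : Fin ℓ) : Module.End ℂ (List (Fin ℓ) → ℂ) :=
  LinearMap.pi fun w => wordWeight A i w • LinearMap.proj w

/-- The value of `f i • φ` at a word, as a linear form in `φ`; the recursion is forced by
`⁅e k, f i⁆ = δ_{ki} h i`. -/
def coFAt (i : Fin ℓ) : List (Fin ℓ) → (List (Fin ℓ) → ℂ) →ₗ[ℂ] ℂ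
  | [] => 0
  | k :: w => coFAt i w ∘ₗ coE k + if k = i then LinearMap.proj w ∘ₗ coH A i else 0

/-- The action of `f i` on functions on words. -/
def coF (i : Fin ℓ) : Module.End ℂ (List (Fin ℓ) → ℂ) :=
  LinearMap.pi (coFAt A i)

theorem coE_apply (i : Fin ℓ) (φ : List (Fin ℓ) → ℂ) (w : List (Fin ℓ)) :
    coE i φ w = φ (i :: w) := rfl

theorem coH_apply (i : Fin ℓ) (φ : List (Fin ℓ) → ℂ) (w : List (Fin ℓ)) :
    coH A i φ w = wordWeight A i w * φ w := rfl

theorem coF_apply_nil (i : Fin ℓ) (φ : List (Fin ℓ) → ℂ) : coF A i φ [] = 0 := rfl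

theorem coF_apply_cons (i k : Fin ℓ) (φ : List (Fin ℓ) → ℂ) (w : List (Fin ℓ)) :
    coF A i φ (k :: w) = coF A i (coE k φ) w + if k = i then coH A i φ w else 0 := by
  by_cases hki : k = i <;> simp [coF, coFAt, hki]

theorem lie_coH_coE (i j : Fin ℓ) : ⁅coH A i, coE j⁆ = (A i j : ℂ) • coE j := by
  ext φ w
  simp only [Ring.lie_def, LinearMap.sub_apply, Module.End.mul_apply, Pi.sub_apply, coH_apply,
    coE_apply, wordWeight, List.map_cons, List.sum_cons, Int.cast_add, LinearMap.smul_apply,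
    Pi.smul_apply, smul_eq_mul]
  ring

theorem chevalleyRelations_co : ChevalleyRelations A coE (coF A) (coH A) where
  lie_h_h i j := by
    ext φ w
    simp only [Ring.lie_def, LinearMap.sub_apply, Module.End.mul_apply, Pi.sub_apply, coH_apply,
      LinearMap.zero_apply, Pi.zero_apply]
    ring
  lie_e_f i j := by
    refine LinearMap.ext fun φ => funext fun w => ?_
    rw [Ring.lie_def, LinearMap.sub_apply, Module.End.mul_apply, Pi.sub_apply, coE_apply,
      coF_apply_cons, Module.End.mul_apply, add_sub_cancel_left]
    split_ifs with hij <;> simp [hij]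
  lie_h_e i j := lie_coH_coE A i j
  lie_h_f i j := by
    refine LinearMap.ext fun φ => funext fun w => ?_
    simp only [Ring.lie_def, LinearMap.sub_apply, Module.End.mul_apply, Pi.sub_apply, coH_apply,
      LinearMap.neg_apply, Pi.neg_apply, LinearMap.smul_apply, Pi.smul_apply, smul_eq_mul]
    induction w generalizing φ with
    | nil => simp [coF_apply_nil]
    | cons k w ih =>
      have hcomm : coE k (coH A i φ) = coH A i (coE k φ) - (A i k : ℂ) • coE k φ := by
        rw [eq_sub_iff_add_eq, ← eq_sub_iff_add_eq']
        exact congr($(lie_coH_coE A i k) φ).symm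
      have hrec := ih (coE k φ)
      simp only [coF_apply_cons, hcomm, map_sub, map_smul, Pi.sub_apply, Pi.smul_apply,
        smul_eq_mul, coH_apply] at hrec ⊢
      split_ifs with hkj <;>
        simp only [wordWeight, List.map_cons, List.sum_cons, Int.cast_add, hkj] at hrec ⊢ <;>
        linear_combination hrec

theorem coF_ad_pow_apply_nil (i j : Fin ℓ) (n : ℕ) (φ : List (Fin ℓ) → ℂ) :
    (LieAlgebra.ad ℂ _ (coF A i) ^ n) (coF A j) φ [] = 0 := by
  induction n generalizing φ with
  | zero => rfl
  | succ n ih =>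
    rw [ad_pow_succ_apply, Ring.lie_def]
    simp [ih, coF_apply_nil]

variable {A}

theorem serreRelations_coF (hA : IsSymmetricGCM A) : SerreRelations A (coF A) := by
  intro i j hij
  set θ := (LieAlgebra.ad ℂ _ (coF A i) ^ (1 - A i j).toNat) (coF A j)
  refine LinearMap.ext fun φ => funext fun w => ?_
  induction w generalizing φ with
  | nil => exact coF_ad_pow_apply_nil A i j _ φ
  | cons k w ih =>
    have hcomm : coE k * θ = θ * coE k :=
      sub_eq_zero.1 ((chevalleyRelations_co A).lie_e_serre_f hA hij k)
    calc θ φ (k :: w) = θ (coE k φ) w := congr($hcomm φ w)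
      _ = 0 := ih _

theorem Hbar_ne_zero (hA : IsSymmetricGCM A) (i : Fin ℓ) : Hbar A i ≠ 0 := by
  let ε : List (Fin ℓ) → ℂ := Pi.single [] 1
  have hE (i) : coE i ε = 0 := funext fun w => by simp [coE_apply, ε]
  have hH (i) : coH A i ε = (1 : ℂ) • ε := funext fun w => by
    cases w <;> simp [coH_apply, ε, wordWeight]
  let W := wordSpan (coF A) ε
  have mem (j) (x) (hx : x ∈ W) := (chevalleyRelations_co A).e_h_mem_wordSpan hE hH hx j
  have hc := (chevalleyRelations_co A).restrict (fun j x hx => (mem j x hx).1)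
    (fun j x hx => apply_mem_wordSpan hx j) (fun j x hx => (mem j x hx).2)
  let vac : W := ⟨ε, mem_wordSpan_self⟩
  have he := hc.serreRelations_of_wordSpan_eq_top hA (v := vac)
    (fun j => Subtype.ext (hE j :)) (wordSpan_restrict_wordSpan (coF A) ε)
  have hf := (serreRelations_coF hA).restrict fun j x hx => apply_mem_wordSpan (v := ε) hx j
  intro hzero
  have hact := lift_Hbar hc he hf i
  rw [hzero, map_zero] at hact
  have hε : (0 : ℂ) = coH A i ε [] :=
    congr(($hact vac : List (Fin ℓ) → ℂ) [])
  simp [hH, ε] at hε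

end Coinduced

end KacMoody

/-! ### Root spaces -/

namespace KacMoody

open scoped Matrix

section Words

variable {ℓ : ℕ} {A : Matrix (Fin ℓ) (Fin ℓ) ℤ} {L : Type*} [LieRing L] {e f h : Fin ℓ → L}

/-- The simple root `α i`, as a coefficient vector. -/
abbrev simpleRoot (i : Fin ℓ) : Fin ℓ → ℤ := Pi.single i 1

theorem simpleRoot_pos (i : Fin ℓ) : 0 < simpleRoot i := by simp

theorem mulVec_simpleRoot (i j : Fin ℓ) : (A *ᵥ simpleRoot j) i = A i j := by simp

/-- `IsWord e c x` says that `x` is an iterated bracket `⁅e i₁, ⁅e i₂, …, e iₙ⁆⁆` with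
`c = ∑ α iₖ`. -/
inductive IsWord (e : Fin ℓ → L) : (Fin ℓ → ℤ) → L → Prop
  | generator (i : Fin ℓ) : IsWord e (simpleRoot i) (e i)
  | lie (i : Fin ℓ) {c : Fin ℓ → ℤ} {x : L} (hx : IsWord e c x) :
      IsWord e (simpleRoot i + c) ⁅e i, x⁆

section Bracket

variable [LieAlgebra ℂ L]

/-- The span of all iterated brackets of the `e i`. -/
def wordSubmodule (e : Fin ℓ → L) : Submodule ℂ L :=
  Submodule.span ℂ {x | ∃ c, IsWord e c x}

theorem lie_mem_of_mem_span {s : Set L} {T : Submodule ℂ L} {y : L} (hs : ∀ x ∈ s, ⁅y, x⁆ ∈ T)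
    {x : L} (hx : x ∈ Submodule.span ℂ s) : ⁅y, x⁆ ∈ T :=
  Submodule.span_le (p := T.comap (LieAlgebra.ad ℂ L y : L →ₗ[ℂ] L)).2 hs hx

end Bracket

namespace IsWord

variable {c : Fin ℓ → ℤ} {x : L}

theorem pos (hx : IsWord e c x) : 0 < c := by
  induction hx with
  | generator i => exact simpleRoot_pos i
  | lie i _ ih => exact add_pos (simpleRoot_pos i) ih

theorem mem_wordSubmodule [LieAlgebra ℂ L] (hx : IsWord e c x) : x ∈ wordSubmodule e :=
  Submodule.subset_span ⟨c, hx⟩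

theorem eq_generator_or_eq_zero (hx : IsWord e c x) {i : Fin ℓ} (hc : ∀ j ≠ i, c j = 0) :
    c = simpleRoot i ∧ x = e i ∨ x = 0 := by
  induction hx with
  | generator k =>
    obtain rfl : k = i := by
      by_contra hki
      simpa using hc k hki
    exact .inl ⟨rfl, rfl⟩
  | @lie k d x hx ih =>
    have hd : 0 ≤ d := hx.pos.le
    obtain rfl : k = i := by
      by_contra hki
      have hck := hc k hki
      have hdk := hd k
      simp only [Pi.add_apply, Pi.single_eq_same, Pi.zero_apply] at hck hdk
      omega
    rcases ih fun j hj => by simpa [hj] using hc j hj with ⟨-, rfl⟩ | rfl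
    · exact .inr (lie_self _)
    · exact .inr (lie_zero _)

end IsWord

theorem finite_setOf_isWord (e : Fin ℓ → L) (c : Fin ℓ → ℤ) : {x | IsWord e c x}.Finite := by
  suffices hfin : ∀ n : ℕ, {x | ∃ c : Fin ℓ → ℤ, ∑ i, c i = n ∧ IsWord e c x}.Finite from
    (hfin (∑ i, c i).toNat).subset fun x hx =>
      ⟨c, (Int.toNat_of_nonneg (Finset.sum_nonneg fun i _ => hx.pos.le i)).symm, hx⟩
  intro n
  induction n with
  | zero =>
    refine Set.finite_empty.subset ?_
    rintro x ⟨c, hc, hx⟩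
    exact hx.pos.ne' <| funext fun i =>
      (Finset.sum_eq_zero_iff_of_nonneg fun i _ => hx.pos.le i).1 (by simpa using hc) i
        (Finset.mem_univ i)
  | succ n ih =>
    refine ((Set.finite_range e).union (Set.finite_iUnion fun i => ih.image (⁅e i, ·⁆))).subset ?_
    rintro _ ⟨_, hc, hx⟩
    cases hx with
    | generator i => exact .inl ⟨i, rfl⟩
    | @lie i d y hy =>
      refine .inr (Set.mem_iUnion.2 ⟨i, y, ⟨d, ?_, hy⟩, rfl⟩)
      simp only [Pi.add_apply, Finset.sum_add_distrib, Finset.sum_pi_single', Finset.mem_univ,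
        if_true, Nat.cast_succ] at hc
      omega

variable [LieAlgebra ℂ L]

theorem lie_generator_mem_wordSubmodule (i : Fin ℓ) {x : L} (hx : x ∈ wordSubmodule e) :
    ⁅e i, x⁆ ∈ wordSubmodule e :=
  lie_mem_of_mem_span (by rintro _ ⟨_, hx⟩; exact (hx.lie i).mem_wordSubmodule) hx

namespace ChevalleyRelations

variable (H : ChevalleyRelations A e f h)

include H

theorem lie_h_word {c : Fin ℓ → ℤ} {x : L} (hx : IsWord e c x) (k : Fin ℓ) :
    ⁅h k, x⁆ = ((A *ᵥ c) k : ℂ) • x := by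
  induction hx with
  | generator i => rw [mulVec_simpleRoot, H.lie_h_e]
  | lie i _ ih =>
    rw [leibniz_lie, ih, H.lie_h_e, Matrix.mulVec_add, Pi.add_apply, mulVec_simpleRoot, lie_smul,
      smul_lie, ← add_smul, Int.cast_add]

theorem lie_h_mem_wordSubmodule (k : Fin ℓ) {x : L} (hx : x ∈ wordSubmodule e) :
    ⁅h k, x⁆ ∈ wordSubmodule e := by
  refine lie_mem_of_mem_span ?_ hx
  rintro _ ⟨c, hw⟩
  exact H.lie_h_word hw k ▸ Submodule.smul_mem _ _ hw.mem_wordSubmodule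

theorem lie_e_mem_wordSubmodule (k : Fin ℓ) {x : L} (hx : x ∈ Submodule.span ℂ (Set.range h)) :
    ⁅e k, x⁆ ∈ wordSubmodule e := by
  refine lie_mem_of_mem_span ?_ hx
  rintro _ ⟨j, rfl⟩
  rw [← lie_skew, H.lie_h_e]
  exact neg_mem (Submodule.smul_mem _ _ (IsWord.generator k).mem_wordSubmodule)

theorem lie_f_mem_sup (k : Fin ℓ) {x : L} (hx : x ∈ wordSubmodule e) :
    ⁅f k, x⁆ ∈ wordSubmodule e ⊔ Submodule.span ℂ (Set.range h) := by
  refine lie_mem_of_mem_span ?_ hx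
  rintro _ ⟨c, hw⟩
  induction hw with
  | generator i =>
    rw [← lie_skew, H.lie_e_f]
    split_ifs
    · exact neg_mem (Submodule.mem_sup_right (Submodule.subset_span ⟨i, rfl⟩))
    · simp
  | lie i hw ih =>
    rw [leibniz_lie, ← lie_skew (f k), H.lie_e_f, neg_lie]
    refine add_mem (neg_mem ?_) ?_
    · split_ifs
      · exact Submodule.mem_sup_left (H.lie_h_mem_wordSubmodule i hw.mem_wordSubmodule)
      · simp
    · obtain ⟨a, ha, b, hb, hab⟩ := Submodule.mem_sup.1 ih
      rw [← hab, lie_add]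
      exact Submodule.mem_sup_left
        (add_mem (lie_generator_mem_wordSubmodule i ha) (H.lie_e_mem_wordSubmodule i hb))

end ChevalleyRelations

/-- The sum of the span of the `h i` with the spans of the iterated brackets of the `e i` and of
the `f i`. -/
def triangularSum (e f h : Fin ℓ → L) : Submodule ℂ L :=
  wordSubmodule e ⊔ Submodule.span ℂ (Set.range h) ⊔ wordSubmodule f

theorem triangularSum_swap (e f h : Fin ℓ → L) :
    triangularSum f e (fun i => -h i) = triangularSum e f h := by
  have hneg : Submodule.span ℂ (Set.range fun i => -h i) = Submodule.span ℂ (Set.range h) := by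
    rw [← Submodule.span_neg (Set.range h), Set.neg_range]
  rw [triangularSum, triangularSum, hneg, sup_right_comm, sup_comm (wordSubmodule f),
    sup_right_comm]

namespace ChevalleyRelations

variable (H : ChevalleyRelations A e f h)

include H

theorem lie_h_mem_triangularSum (k : Fin ℓ) {x : L} (hx : x ∈ triangularSum e f h) :
    ⁅h k, x⁆ ∈ triangularSum e f h := by
  obtain ⟨y, hy, c, hc, rfl⟩ := Submodule.mem_sup.1 hx
  obtain ⟨a, ha, b, hb, rfl⟩ := Submodule.mem_sup.1 hy
  have hzero : ⁅h k, b⁆ ∈ (⊥ : Submodule ℂ L) := lie_mem_of_mem_span (by simp [H.lie_h_h]) hb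
  have hneg := neg_mem (H.swap.lie_h_mem_wordSubmodule k hc)
  rw [neg_lie, neg_neg] at hneg
  rw [lie_add, lie_add, (Submodule.mem_bot ℂ).1 hzero, add_zero]
  exact add_mem (Submodule.mem_sup_left (Submodule.mem_sup_left (H.lie_h_mem_wordSubmodule k ha)))
    (Submodule.mem_sup_right hneg)

theorem lie_f_mem_triangularSum (k : Fin ℓ) {x : L} (hx : x ∈ triangularSum e f h) :
    ⁅f k, x⁆ ∈ triangularSum e f h := by
  obtain ⟨y, hy, c, hc, rfl⟩ := Submodule.mem_sup.1 hx
  obtain ⟨a, ha, b, hb, rfl⟩ := Submodule.mem_sup.1 hy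
  have hb' : b ∈ Submodule.span ℂ (Set.range fun i => -h i) := by
    rwa [← Set.neg_range, Submodule.span_neg]
  rw [lie_add, lie_add]
  exact add_mem (add_mem (Submodule.mem_sup_left (H.lie_f_mem_sup k ha))
    (Submodule.mem_sup_right (H.swap.lie_e_mem_wordSubmodule k hb')))
    (Submodule.mem_sup_right (lie_generator_mem_wordSubmodule k hc))

theorem lie_e_mem_triangularSum (k : Fin ℓ) {x : L} (hx : x ∈ triangularSum e f h) :
    ⁅e k, x⁆ ∈ triangularSum e f h := by
  rw [← triangularSum_swap] at hx ⊢
  exact H.swap.lie_f_mem_triangularSum k hx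

end ChevalleyRelations

theorem lie_mem_of_generators {M : Type*} [AddCommGroup M] [Module ℂ M] [LieRingModule (gA A) M]
    [LieModule ℂ (gA A) M] {T : Submodule ℂ M} (he : ∀ i, ∀ t ∈ T, ⁅Ebar A i, t⁆ ∈ T)
    (hf : ∀ i, ∀ t ∈ T, ⁅Fbar A i, t⁆ ∈ T) (hh : ∀ i, ∀ t ∈ T, ⁅Hbar A i, t⁆ ∈ T) (x : gA A)
    {t : M} (ht : t ∈ T) : ⁅x, t⁆ ∈ T := by
  let K : LieSubalgebra ℂ (gA A) :=
    { carrier := {x | ∀ t ∈ T, ⁅x, t⁆ ∈ T}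
      add_mem' := fun ha hb t ht => by rw [add_lie]; exact add_mem (ha t ht) (hb t ht)
      zero_mem' := fun t _ => by rw [zero_lie]; exact zero_mem T
      smul_mem' := fun c x hx t ht => by rw [smul_lie]; exact Submodule.smul_mem _ _ (hx t ht)
      lie_mem' := fun ha hb t ht => by
        rw [lie_lie]; exact sub_mem (ha _ (hb t ht)) (hb _ (ha t ht)) }
  have hK : K = ⊤ := eq_top_of_generators_mem he hf hh
  have hx : x ∈ K := hK ▸ LieSubalgebra.mem_top x
  exact hx t ht

variable (A) in
theorem triangularSum_eq_top : triangularSum (Ebar A) (Fbar A) (Hbar A) = ⊤ := by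
  have H := chevalleyRelations_gA A
  let K : LieSubalgebra ℂ (gA A) :=
    { triangularSum (Ebar A) (Fbar A) (Hbar A) with
      lie_mem' := fun {x y} _ hy => lie_mem_of_generators
        (fun i _ ht => H.lie_e_mem_triangularSum i ht)
        (fun i _ ht => H.lie_f_mem_triangularSum i ht)
        (fun i _ ht => H.lie_h_mem_triangularSum i ht) x hy }
  refine (LieSubalgebra.toSubmodule_eq_top K).2 <| eq_top_of_generators_mem ?_ ?_ ?_
  · exact fun i =>
      Submodule.mem_sup_left (Submodule.mem_sup_left (IsWord.generator i).mem_wordSubmodule)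
  · exact fun i => Submodule.mem_sup_right (IsWord.generator i).mem_wordSubmodule
  · exact fun i => Submodule.mem_sup_left (Submodule.mem_sup_right (Submodule.subset_span ⟨i, rfl⟩))

end Words

section RootSpaces

variable {ℓ : ℕ} {A : Matrix (Fin ℓ) (Fin ℓ) ℤ} {c d : Fin ℓ → ℤ} {x y : gA A}

theorem mem_rootSpace : x ∈ rootSpace A c ↔ ∀ i, ⁅Hbar A i, x⁆ = ((A *ᵥ c) i : ℂ) • x := by
  simp only [rootSpace, Submodule.mem_iInf, Module.End.mem_eigenspace_iff, LieAlgebra.ad_apply]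
  rfl

theorem lie_mem_rootSpace (hx : x ∈ rootSpace A c) (hy : y ∈ rootSpace A d) :
    ⁅x, y⁆ ∈ rootSpace A (c + d) := by
  refine mem_rootSpace.2 fun i => ?_
  rw [leibniz_lie, mem_rootSpace.1 hx, mem_rootSpace.1 hy, Matrix.mulVec_add, Pi.add_apply,
    Int.cast_add, add_smul, smul_lie, lie_smul]

theorem ad_pow_mem_rootSpace (hx : x ∈ rootSpace A c) (hy : y ∈ rootSpace A d) (n : ℕ) :
    (LieAlgebra.ad ℂ (gA A) y ^ n) x ∈ rootSpace A (c + n • d) := by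
  induction n with
  | zero => simpa using hx
  | succ n ih =>
    rw [ad_pow_succ_apply, succ_nsmul', add_left_comm]
    exact lie_mem_rootSpace hy ih

theorem IsWord.mem_rootSpace (hx : IsWord (Ebar A) c x) : x ∈ rootSpace A c :=
  KacMoody.mem_rootSpace.2 ((chevalleyRelations_gA A).lie_h_word hx)

theorem IsWord.mem_rootSpace_neg (hx : IsWord (Fbar A) c x) : x ∈ rootSpace A (-c) := by
  refine KacMoody.mem_rootSpace.2 fun i => ?_
  have := (chevalleyRelations_gA A).swap.lie_h_word hx i
  rw [neg_lie, neg_eq_iff_eq_neg] at this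
  simp [this, Matrix.mulVec_neg]

theorem Ebar_mem_rootSpace (i : Fin ℓ) : Ebar A i ∈ rootSpace A (simpleRoot i) :=
  (IsWord.generator i).mem_rootSpace

theorem Fbar_mem_rootSpace (i : Fin ℓ) : Fbar A i ∈ rootSpace A (-simpleRoot i) :=
  (IsWord.generator i).mem_rootSpace_neg

theorem Hbar_mem_rootSpace (i : Fin ℓ) : Hbar A i ∈ rootSpace A 0 :=
  mem_rootSpace.2 fun k => by simp [(chevalleyRelations_gA A).lie_h_h]

theorem iSupIndep_rootSpace (hdet : A.det ≠ 0) : iSupIndep (rootSpace A) := by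
  have hind := Module.End.independent_iInf_maxGenEigenspace_of_forall_mapsTo
    (fun i : Fin ℓ => LieAlgebra.ad ℂ (gA A) (Hbar A i)) fun i j =>
      Module.End.mapsTo_maxGenEigenspace_of_comm <| LinearMap.ext fun x => by
        simp [leibniz_lie (Hbar A j) (Hbar A i), (chevalleyRelations_gA A).lie_h_h]
  have hinj : Function.Injective fun (c : Fin ℓ → ℤ) i => (((A *ᵥ c) i : ℤ) : ℂ) := by
    intro c d hcd
    refine sub_eq_zero.1 (Matrix.eq_zero_of_mulVec_eq_zero hdet (funext fun i => ?_))
    simpa [Matrix.mulVec_sub, sub_eq_zero] using congrFun hcd i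
  exact (hind.comp hinj).mono fun c =>
    iInf_mono fun i => Module.End.eigenspace_le_maxGenEigenspace

variable (A c) in
/-- The words in the `e i` of degree `c`, the words in the `f i` of degree `-c`, and the `h i` if
`c = 0`: a spanning set of `rootSpace A c`. -/
def rootVectors : Set (gA A) :=
  {x | IsWord (Ebar A) c x} ∪ {x | c = 0 ∧ x ∈ Set.range (Hbar A)} ∪ {x | IsWord (Fbar A) (-c) x}

theorem span_rootVectors_le (c : Fin ℓ → ℤ) :
    Submodule.span ℂ (rootVectors A c) ≤ rootSpace A c := by
  refine Submodule.span_le.2 ?_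
  rintro x ((hx | ⟨rfl, i, rfl⟩) | hx)
  exacts [hx.mem_rootSpace, Hbar_mem_rootSpace i, neg_neg c ▸ hx.mem_rootSpace_neg]

theorem iSup_span_rootVectors : ⨆ c, Submodule.span ℂ (rootVectors A c) = ⊤ := by
  have hmem {c : Fin ℓ → ℤ} {x} (hx : x ∈ rootVectors A c) :
      x ∈ ⨆ c, Submodule.span ℂ (rootVectors A c) :=
    Submodule.mem_iSup_of_mem c (Submodule.subset_span hx)
  rw [eq_top_iff, ← triangularSum_eq_top A]
  refine sup_le (sup_le ?_ ?_) ?_ <;> refine Submodule.span_le.2 ?_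
  · rintro x ⟨c, hx⟩
    exact hmem (.inl (.inl hx))
  · exact fun x hx => hmem (c := 0) (.inl (.inr ⟨rfl, hx⟩))
  · rintro x ⟨c, hx⟩
    exact hmem (c := -c) (.inr (by rwa [Set.mem_ofPred, neg_neg]))

theorem iSup_rootSpace : ⨆ c, rootSpace A c = ⊤ :=
  top_le_iff.1 (iSup_span_rootVectors.symm.trans_le (iSup_mono span_rootVectors_le))

theorem rootSpace_eq_span (hdet : A.det ≠ 0) (c : Fin ℓ → ℤ) :
    rootSpace A c = Submodule.span ℂ (rootVectors A c) := by
  refine le_antisymm (fun x hx => ?_) (span_rootVectors_le c)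
  have hx' : x ∈ ⨆ c, Submodule.span ℂ (rootVectors A c) := iSup_span_rootVectors ▸ trivial
  rw [iSup_split_single _ c] at hx'
  obtain ⟨a, ha, b, hb, rfl⟩ := Submodule.mem_sup.1 hx'
  have hbc : b ∈ rootSpace A c := by simpa using sub_mem hx (span_rootVectors_le c ha)
  have hb' : b ∈ ⨆ d, ⨆ (_ : d ≠ c), rootSpace A d :=
    iSup₂_mono (fun d _ => span_rootVectors_le d) hb
  rwa [Submodule.disjoint_def.1 (iSupIndep_rootSpace hdet c) b hbc hb', add_zero]

theorem rootSpace_eq_span_words (hdet : A.det ≠ 0) (hc : 0 < c) :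
    rootSpace A c = Submodule.span ℂ {x | IsWord (Ebar A) c x} := by
  refine (rootSpace_eq_span hdet c).trans (congrArg _ (Set.Subset.antisymm ?_ ?_))
  · rintro x ((hx | ⟨rfl, -⟩) | hx)
    exacts [hx, (lt_irrefl _ hc).elim, (lt_asymm hc (neg_pos.1 hx.pos)).elim]
  · exact fun x hx => .inl (.inl hx)

theorem rootSpace_eq_bot_of_mixed (hdet : A.det ≠ 0) (hc : ¬0 ≤ c) (hc' : ¬c ≤ 0) :
    rootSpace A c = ⊥ := by
  rw [rootSpace_eq_span hdet, Submodule.span_eq_bot]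
  rintro x ((hx | ⟨rfl, -⟩) | hx)
  exacts [(hc hx.pos.le).elim, (hc le_rfl).elim, (hc' (neg_pos.1 hx.pos).le).elim]

theorem finiteDimensional_rootSpace (hdet : A.det ≠ 0) (c : Fin ℓ → ℤ) :
    FiniteDimensional ℂ (rootSpace A c) := by
  rw [rootSpace_eq_span hdet]
  exact FiniteDimensional.span_of_finite ℂ <| ((finite_setOf_isWord _ c).union
    ((Set.finite_range (Hbar A)).subset fun x hx => hx.2)).union (finite_setOf_isWord _ (-c))

theorem mult_eq_zero (hdet : A.det ≠ 0) : mult A c = 0 ↔ rootSpace A c = ⊥ :=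
  have := finiteDimensional_rootSpace hdet c
  Submodule.finrank_eq_zero

theorem Ebar_ne_zero (hA : IsSymmetricGCM A) (i : Fin ℓ) : Ebar A i ≠ 0 := fun hzero =>
  Hbar_ne_zero hA i <| by simpa [hzero] using ((chevalleyRelations_gA A).lie_e_f i i).symm

theorem mult_simpleRoot (hA : IsSymmetricGCM A) (hdet : A.det ≠ 0) (i : Fin ℓ) :
    mult A (simpleRoot i) = 1 := by
  have hspan : rootSpace A (simpleRoot i) = ℂ ∙ Ebar A i := by
    refine le_antisymm ?_
      ((Submodule.span_singleton_le_iff_mem _ _).2 (Ebar_mem_rootSpace i))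
    rw [rootSpace_eq_span_words hdet (simpleRoot_pos i), Submodule.span_le]
    intro x hx
    rcases hx.eq_generator_or_eq_zero (i := i) (by simp +contextual) with ⟨-, rfl⟩ | rfl
    exacts [Submodule.mem_span_singleton_self _, zero_mem _]
  rw [mult, hspan, finrank_span_singleton (Ebar_ne_zero hA i)]

theorem rootSpace_eq_bot_of_multiple (hdet : A.det ≠ 0) (hc : 0 < c) {i : Fin ℓ}
    (hci : ∀ j ≠ i, c j = 0) (hne : c ≠ simpleRoot i) : rootSpace A c = ⊥ := by
  rw [rootSpace_eq_span_words hdet hc, Submodule.span_eq_bot]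
  exact fun x hx => (hx.eq_generator_or_eq_zero hci).resolve_left fun hx => hne hx.1

end RootSpaces

end KacMoody

/-! ### Reflections and the bound on the norm of a root -/

namespace KacMoody

open scoped Matrix

section Reflection

variable {ℓ : ℕ} {A : Matrix (Fin ℓ) (Fin ℓ) ℤ} {c : Fin ℓ → ℤ}

theorem isSl2Triple (hA : IsSymmetricGCM A) (i : Fin ℓ) :
    IsSl2Triple (Hbar A i) (Ebar A i) (Fbar A i) where
  h_ne_zero := Hbar_ne_zero hA i
  lie_e_f := by rw [(chevalleyRelations_gA A).lie_e_f, if_pos rfl]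
  lie_h_e_nsmul := by
    rw [(chevalleyRelations_gA A).lie_h_e, hA.diag, ← Nat.cast_smul_eq_nsmul ℂ]
    norm_num
  lie_h_f_nsmul := by
    rw [(chevalleyRelations_gA A).lie_h_f, hA.diag, ← Nat.cast_smul_eq_nsmul ℂ]
    norm_num

theorem exists_ad_Ebar_pow_eq_zero (i : Fin ℓ) (x : gA A) :
    ∃ n, (LieAlgebra.ad ℂ (gA A) (Ebar A i) ^ n) x = 0 := by
  have H := chevalleyRelations_gA A
  have heh (j : Fin ℓ) : ⁅Ebar A i, ⁅Ebar A i, Hbar A j⁆⁆ = 0 := by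
    rw [← lie_skew _ (Hbar A j), H.lie_h_e, lie_neg, lie_smul, lie_self, smul_zero, neg_zero]
  have htop : LieSubalgebra.engel ℂ (Ebar A i) = ⊤ := by
    refine eq_top_of_generators_mem (fun j => ?_) (fun j => ?_) (fun j => ?_) <;>
      rw [LieSubalgebra.mem_engel_iff]
    · rcases eq_or_ne i j with rfl | hij
      · exact ⟨1, by simp⟩
      · exact ⟨_, serreRelations_Ebar A i j hij⟩
    · refine ⟨3, ?_⟩
      simp only [ad_pow_succ_apply, pow_zero, Module.End.one_apply, H.lie_e_f]
      split_ifs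
      · exact heh i
      · simp only [lie_zero]
    · exact ⟨2, by simpa only [ad_pow_succ_apply, pow_zero, Module.End.one_apply] using heh j⟩
  exact (LieSubalgebra.mem_engel_iff ℂ _ _).1 (htop ▸ LieSubalgebra.mem_top x)

theorem exists_hasPrimitiveVectorWith (hA : IsSymmetricGCM A) {i : Fin ℓ} {m : ℕ}
    (hm : (A *ᵥ c) i = m) (hc : rootSpace A c ≠ ⊥) :
    ∃ (N : ℕ) (v : gA A), v ∈ rootSpace A (c + N • simpleRoot i) ∧
      (isSl2Triple hA i).HasPrimitiveVectorWith v ((m + 2 * N : ℕ) : ℂ) := by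
  classical
  obtain ⟨x, hx, hx0⟩ := Submodule.exists_mem_ne_zero_of_ne_bot hc
  have hex := exists_ad_Ebar_pow_eq_zero i x
  obtain ⟨N, hN⟩ : ∃ N, Nat.find hex = N + 1 := Nat.exists_eq_succ_of_ne_zero fun h0 =>
    hx0 (by simpa [h0] using Nat.find_spec hex)
  have hv := ad_pow_mem_rootSpace hx (Ebar_mem_rootSpace i) N
  refine ⟨N, _, hv, Nat.find_min hex (by omega), ?_, ?_⟩
  · rw [mem_rootSpace.1 hv i, Matrix.mulVec_add, Matrix.mulVec_smul, Pi.add_apply, hm,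
      Pi.smul_apply, mulVec_simpleRoot, hA.diag]
    congr 1
    push_cast [nsmul_eq_mul]
    ring
  · rw [← ad_pow_succ_apply, ← hN]
    exact Nat.find_spec hex

theorem rootSpace_eq_bot_of_reflection (hA : IsSymmetricGCM A) {i : Fin ℓ} {m : ℕ}
    (hm : (A *ᵥ c) i = m) (hr : rootSpace A (c - m • simpleRoot i) = ⊥) : rootSpace A c = ⊥ := by
  by_contra hc
  obtain ⟨N, v, hv, hprim⟩ := exists_hasPrimitiveVectorWith hA hm hc
  have hne := hprim.pow_toEnd_f_ne_zero_of_eq_nat (n := m + 2 * N) rfl (i := m + N) (by omega)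
  have hmem := ad_pow_mem_rootSpace hv (Fbar_mem_rootSpace i) (m + N)
  have hdeg : c + N • simpleRoot i + (m + N) • -simpleRoot i = c - m • simpleRoot i := by module
  rw [hdeg, hr] at hmem
  exact hne ((Submodule.mem_bot ℂ).1 hmem)

end Reflection

section Form

variable {ℓ : ℕ} {A : Matrix (Fin ℓ) (Fin ℓ) ℤ} {c : Fin ℓ → ℤ}

variable (A) in
/-- The bilinear form `(α|β) = ∑ i j, c i * A i j * d j` on the root lattice. -/
noncomputable abbrev form : LinearMap.BilinForm ℤ (Fin ℓ → ℤ) := Matrix.toBilin' A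

theorem form_apply (c d : Fin ℓ → ℤ) : form A c d = ∑ i, c i * (A *ᵥ d) i :=
  Matrix.toBilin'_apply' A c d

theorem form_simpleRoot_left (i : Fin ℓ) (d : Fin ℓ → ℤ) :
    form A (simpleRoot i) d = (A *ᵥ d) i := by
  simp [form_apply, Pi.single_apply]

theorem form_comm (hA : IsSymmetricGCM A) (c d : Fin ℓ → ℤ) : form A c d = form A d c := by
  have hsymm : A.IsSymm := Matrix.IsSymm.ext fun i j => hA.symm j i
  rw [Matrix.toBilin'_apply', Matrix.toBilin'_apply', dotProduct_comm, Matrix.dotProduct_mulVec,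
    ← Matrix.mulVec_transpose, hsymm.eq, dotProduct_comm]

theorem form_reflection (hA : IsSymmetricGCM A) (c : Fin ℓ → ℤ) (i : Fin ℓ) :
    form A (c - (A *ᵥ c) i • simpleRoot i) (c - (A *ᵥ c) i • simpleRoot i) = form A c c := by
  simp only [map_sub, map_smul, LinearMap.sub_apply, LinearMap.smul_apply, form_comm hA c,
    form_simpleRoot_left, mulVec_simpleRoot, hA.diag, smul_eq_mul]
  ring

theorem form_self_le_two (hA : IsSymmetricGCM A) (hdet : A.det ≠ 0) (hpos : 0 < c)
    (hc : rootSpace A c ≠ ⊥) : form A c c ≤ 2 := by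
  obtain ⟨n, hn⟩ : ∃ n : ℕ, ∑ i, c i = n :=
    ⟨_, (Int.toNat_of_nonneg (Finset.sum_nonneg fun i _ => hpos.le i)).symm⟩
  induction n using Nat.strong_induction_on generalizing c with | _ n ih
  by_cases hdom : ∀ i, (A *ᵥ c) i ≤ 0
  · rw [form_apply]
    exact (Finset.sum_nonpos fun i _ => mul_nonpos_of_nonneg_of_nonpos (hpos.le i) (hdom i)).trans
      zero_le_two
  push Not at hdom
  obtain ⟨i, hi⟩ := hdom
  by_cases hmult : ∀ j ≠ i, c j = 0
  · obtain rfl : c = simpleRoot i :=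
      not_not.1 fun hne => hc (rootSpace_eq_bot_of_multiple hdet hpos hmult hne)
    rw [form_simpleRoot_left, mulVec_simpleRoot, hA.diag]
  push Not at hmult
  obtain ⟨j, hji, hj⟩ := hmult
  obtain ⟨m, hm⟩ := Int.eq_ofNat_of_zero_le hi.le
  set d := c - m • simpleRoot i with hd
  have hdj : 0 < d j := by simpa [hd, hji] using (hpos.le j).lt_of_ne' hj
  have hroot : rootSpace A d ≠ ⊥ := fun h => hc (rootSpace_eq_bot_of_reflection hA hm h)
  have hd0 : 0 ≤ d := not_not.1 fun h =>
    hroot (rootSpace_eq_bot_of_mixed hdet h fun h' => (h' j).not_gt hdj)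
  have hsum : ∑ k, d k = n - m := by simp [hd, hn, ← Finset.mul_sum]
  have hsum0 : 0 ≤ ∑ k, d k := Finset.sum_nonneg fun k _ => hd0 k
  have hnorm : form A d d = form A c c := by
    rw [← form_reflection hA c i, hm, Nat.cast_smul_eq_nsmul]
  exact hnorm ▸ ih (n - m) (by omega) (hd0.lt_of_ne fun h => by simp [← h] at hdj) hroot (by omega)

end Form

end KacMoody

/-! ### The cobracket -/

namespace KacMoody

open scoped Matrix TensorProduct

open LieModule.Cohomology

section Semidirect

variable {L M : Type*} [LieRing L] [LieAlgebra ℂ L] [AddCommGroup M] [Module ℂ M]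
  [LieRingModule L M] [LieModule ℂ L M]

variable (L M) in
/-- The semidirect product of `L` with the abelian ideal `M`, as the extension of `L` by `M` with
trivial cocycle. Homomorphisms into it that lift the identity of `L` are the derivations
`L → M`. -/
def AbelianExtension : Type _ := LieAlgebra.ofTwoCocycle (0 : twoCocycle ℂ L M)

namespace AbelianExtension

instance : LieRing (AbelianExtension L M) :=
  inferInstanceAs (LieRing (LieAlgebra.ofTwoCocycle (0 : twoCocycle ℂ L M)))

instance : LieAlgebra ℂ (AbelianExtension L M) :=
  inferInstanceAs (LieAlgebra ℂ (LieAlgebra.ofTwoCocycle (0 : twoCocycle ℂ L M)))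

/-- The element `(x, m)` of the semidirect product. -/
def pair (x : L) (m : M) : AbelianExtension L M :=
  LieAlgebra.ofProd (0 : twoCocycle ℂ L M) (x, m)

theorem pair_add (x y : L) (m n : M) : pair x m + pair y n = pair (x + y) (m + n) :=
  rfl

theorem pair_smul (c : ℂ) (x : L) (m : M) : c • pair x m = pair (c • x) (c • m) :=
  rfl

theorem pair_zero : pair (0 : L) (0 : M) = 0 :=
  rfl

theorem eq_of_pair_eq_pair {x y : L} {m n : M} (h : pair x m = pair y n) : m = n :=
  congrArg (fun z => z.carrier.2) h

theorem lie_pair (x y : L) (m n : M) : ⁅pair x m, pair y n⁆ = pair ⁅x, y⁆ (⁅x, n⁆ - ⁅y, m⁆) := by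
  refine (LieAlgebra.bracket_ofTwoCocycle ..).trans ?_
  simp [pair]

theorem exists_lieDerivation_of_lift {φ : L →ₗ⁅ℂ⁆ AbelianExtension L M}
    (hφ : ∀ x, ∃ m, φ x = pair x m) :
    ∃ D : LieDerivation ℂ L M, ∀ x, φ x = pair x (D x) := by
  choose D hD using hφ
  have hD_eq {x : L} {m : M} (h : φ x = pair x m) : D x = m :=
    eq_of_pair_eq_pair ((hD x).symm.trans h)
  have hadd (x y : L) : D (x + y) = D x + D y :=
    hD_eq (by rw [map_add φ, hD, hD, pair_add])
  have hsmul (a : ℂ) (x : L) : D (a • x) = a • D x :=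
    hD_eq (by rw [map_smul φ, hD, pair_smul])
  have hlie (x y : L) : D ⁅x, y⁆ = ⁅x, D y⁆ - ⁅y, D x⁆ :=
    hD_eq (by rw [LieHom.map_lie, hD, hD, lie_pair])
  exact ⟨⟨⟨⟨D, hadd⟩, hsmul⟩, hlie⟩, hD⟩

end AbelianExtension

end Semidirect

open AbelianExtension

section Derivation

variable {ℓ : ℕ} {A : Matrix (Fin ℓ) (Fin ℓ) ℤ} {M : Type*} [AddCommGroup M] [Module ℂ M]
  [LieRingModule (gA A) M] [LieModule ℂ (gA A) M]

theorem exists_lieDerivation {u v : Fin ℓ → M}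
    (hc : ChevalleyRelations A (fun i => pair (Ebar A i) (u i))
      (fun i => pair (Fbar A i) (v i)) fun i => pair (Hbar A i) 0)
    (hu : SerreRelations A fun i => pair (Ebar A i) (u i))
    (hv : SerreRelations A fun i => pair (Fbar A i) (v i)) :
    ∃ D : LieDerivation ℂ (gA A) M, ∀ i, D (Ebar A i) = u i := by
  let φ := lift hc hu hv
  have hφ (x : gA A) : ∃ m, φ x = pair x m := by
    let K : LieSubalgebra ℂ (gA A) :=
      { carrier := {x | ∃ m, φ x = pair x m}
        zero_mem' := ⟨0, by rw [map_zero, pair_zero]⟩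
        add_mem' := by
          rintro x y ⟨m, hm⟩ ⟨n, hn⟩
          exact ⟨m + n, by rw [map_add, hm, hn, pair_add]⟩
        smul_mem' := by
          rintro a x ⟨m, hm⟩
          exact ⟨a • m, by rw [map_smul, hm, pair_smul]⟩
        lie_mem' := by
          rintro x y ⟨m, hm⟩ ⟨n, hn⟩
          exact ⟨_, by rw [LieHom.map_lie, hm, hn, lie_pair]⟩ }
    have hK : K = ⊤ := eq_top_of_generators_mem (fun i => ⟨_, lift_Ebar hc hu hv i⟩)
      (fun i => ⟨_, lift_Fbar hc hu hv i⟩) fun i => ⟨_, lift_Hbar hc hu hv i⟩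
    exact (hK ▸ LieSubalgebra.mem_top x : x ∈ K)
  obtain ⟨D, hD⟩ := exists_lieDerivation_of_lift hφ
  exact ⟨D, fun i => eq_of_pair_eq_pair ((hD _).symm.trans (lift_Ebar hc hu hv i))⟩

end Derivation

section Wedge

variable {L : Type*} [LieRing L] [LieAlgebra ℂ L]

/-- The bivector `x ∧ y = x ⊗ y - y ⊗ x`. -/
noncomputable def wedge : L →ₗ[ℂ] L →ₗ[ℂ] L ⊗[ℂ] L :=
  TensorProduct.mk ℂ L L - (TensorProduct.mk ℂ L L).flip

theorem wedge_apply (x y : L) : wedge x y = x ⊗ₜ[ℂ] y - y ⊗ₜ x :=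
  rfl

theorem wedge_self (x : L) : wedge x x = 0 := by
  rw [wedge_apply, sub_self]

theorem neg_wedge (x y : L) : -wedge x y = wedge y x := by
  rw [wedge_apply, wedge_apply, neg_sub]

theorem lie_wedge (x y z : L) : ⁅x, wedge y z⁆ = wedge ⁅x, y⁆ z + wedge y ⁅x, z⁆ := by
  simp only [wedge_apply, lie_sub, TensorProduct.LieModule.lie_tmul_right]
  abel

theorem lie_wedge_of_lie_eq_zero {h k x : L} {t : ℂ} (hk : ⁅h, k⁆ = 0) (hx : ⁅h, x⁆ = t • x) :
    ⁅h, wedge k x⁆ = t • wedge k x := by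
  rw [lie_wedge, hk, hx, map_zero, LinearMap.zero_apply, zero_add, map_smul]

theorem lie_wedge_sub_lie_wedge {x y h k : L} {s t : ℂ} (hy : ⁅h, y⁆ = s • y)
    (hx : ⁅k, x⁆ = t • x) :
    ⁅x, wedge k y⁆ - ⁅y, wedge h x⁆ = wedge (h + k) ⁅x, y⁆ - (s + t) • wedge x y := by
  rw [lie_wedge, lie_wedge, ← lie_skew x k, ← lie_skew y h, ← lie_skew y x, hx, hy]
  simp only [map_add, map_neg, map_smul, LinearMap.add_apply, LinearMap.neg_apply,
    LinearMap.smul_apply, ← neg_wedge x y]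
  module

theorem ad_pair_pow_succ {h k x y : L} {s t : ℂ} (hx : ⁅h, x⁆ = (2 * s) • x)
    (hy : ⁅h, y⁆ = t • y) (hxk : ⁅k, x⁆ = t • x) (n : ℕ) :
    (LieAlgebra.ad ℂ _ (pair x (wedge h x)) ^ (n + 1)) (pair y (wedge k y)) =
      pair ((LieAlgebra.ad ℂ L x ^ (n + 1)) y)
        (wedge ((n + 1 : ℂ) • h + k) ((LieAlgebra.ad ℂ L x ^ (n + 1)) y) -
          (2 * (n + 1) * (n * s + t) : ℂ) • wedge x ((LieAlgebra.ad ℂ L x ^ n) y)) := by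
  induction n with
  | zero =>
    simp only [ad_pow_succ_apply, pow_zero, Module.End.one_apply, lie_pair]
    rw [lie_wedge_sub_lie_wedge hy hxk]
    congr 1
    simp only [map_add, LinearMap.add_apply, CharP.cast_eq_zero, zero_add, one_smul, mul_one,
      zero_mul, sub_right_inj]
    ring_nf
  | succ n ih =>
    have hyn := lie_ad_pow_of_lie_eq_smul hx hy (n + 1)
    have hkn : ⁅(n + 1 : ℂ) • h + k, x⁆ = ((n + 1 : ℂ) * (2 * s) + t) • x := by
      rw [add_lie, smul_lie, hx, hxk]
      module
    rw [ad_pow_succ_apply, ih, lie_pair, lie_sub, lie_smul, sub_right_comm,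
      lie_wedge_sub_lie_wedge hyn hkn, lie_wedge x x, lie_self, ← ad_pow_succ_apply,
      ← ad_pow_succ_apply]
    congr 1
    simp only [map_zero, LinearMap.zero_apply, zero_add, map_add, map_smul,
      LinearMap.add_apply, LinearMap.smul_apply]
    push_cast
    module

end Wedge

section Cobracket

variable {ℓ : ℕ} {A : Matrix (Fin ℓ) (Fin ℓ) ℤ} {L : Type*} [LieRing L] [LieAlgebra ℂ L]

theorem SerreRelations.pair_wedge (hA : IsSymmetricGCM A) {x h : Fin ℓ → L}
    (hS : SerreRelations A x) {s : ℂ} (hx : ∀ i j, ⁅h i, x j⁆ = (s * A i j) • x j) :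
    SerreRelations A fun i => pair (x i) (wedge (h i) (x i)) := by
  intro i j hij
  obtain ⟨n, hn⟩ := Int.eq_ofNat_of_zero_le (neg_nonneg.2 (hA.nonpos i j hij))
  have hzero : (LieAlgebra.ad ℂ L (x i) ^ (n + 1)) (x j) = 0 := by
    rw [← hS i j hij]
    congr 2
    lia
  have hii : ⁅h i, x i⁆ = (2 * s) • x i := by
    rw [hx, hA.diag, mul_comm]
    norm_cast
  have hji : ⁅h j, x i⁆ = (s * A i j) • x i := by rw [hx, hA.symm]
  have hA_ij : (A i j : ℂ) = -n := by
    rw [← neg_neg (A i j), hn]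
    push_cast
    rfl
  rw [show (1 - A i j).toNat = n + 1 by lia, ad_pair_pow_succ hii (hx i j) hji, hzero,
    map_zero, hA_ij, show (n * s + s * -n : ℂ) = 0 by ring, mul_zero, zero_smul, sub_zero,
    pair_zero]

theorem ChevalleyRelations.pair_wedge (hA : IsSymmetricGCM A) {e f h : Fin ℓ → L}
    (hc : ChevalleyRelations A e f h) :
    ChevalleyRelations A (fun i => pair (e i) (wedge (h i) (e i)))
      (fun i => pair (f i) (wedge (h i) (f i))) fun i => pair (h i) 0 where
  lie_h_h i j := by
    rw [lie_pair, hc.lie_h_h, lie_zero, lie_zero, sub_zero, pair_zero]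
  lie_e_f i j := by
    have hwedge : ⁅e i, wedge (h j) (f j)⁆ - ⁅f j, wedge (h i) (e i)⁆ = 0 := by
      rw [lie_wedge_sub_lie_wedge (s := -A i j) (t := A j i)
        (by rw [hc.lie_h_f, neg_smul]) (hc.lie_h_e j i), hc.lie_e_f, hA.symm j i,
        neg_add_cancel, zero_smul, sub_zero]
      split_ifs with hij
      · rw [hij, ← two_smul ℂ, map_smul, LinearMap.smul_apply, wedge_self, smul_zero]
      · rw [map_zero]
    rw [lie_pair, hwedge, hc.lie_e_f]
    split_ifs
    · rfl
    · rw [pair_zero]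
  lie_h_e i j := by
    rw [lie_pair, lie_zero, sub_zero, lie_wedge_of_lie_eq_zero (hc.lie_h_h i j)
      (hc.lie_h_e i j), hc.lie_h_e, pair_smul]
  lie_h_f i j := by
    have hf : ⁅h i, f j⁆ = (-A i j : ℂ) • f j := by rw [hc.lie_h_f, neg_smul]
    rw [lie_pair, lie_zero, sub_zero, lie_wedge_of_lie_eq_zero (hc.lie_h_h i j) hf, hf,
      ← pair_smul, neg_smul]

theorem exists_cobracket (hA : IsSymmetricGCM A) :
    ∃ D : LieDerivation ℂ (gA A) (gA A ⊗[ℂ] gA A),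
      ∀ i, D (Ebar A i) = wedge (Hbar A i) (Ebar A i) :=
  have hc := chevalleyRelations_gA A
  exists_lieDerivation (hc.pair_wedge hA)
    ((serreRelations_Ebar A).pair_wedge hA (s := 1) fun i j => by
      rw [one_mul, hc.lie_h_e])
    ((serreRelations_Fbar A).pair_wedge hA (s := -1) fun i j => by
      rw [neg_one_mul, neg_smul, hc.lie_h_f])

/-- The cobracket of the standard Lie bialgebra structure on `g(A)`, the derivation with
`e i ↦ h i ∧ e i`, `f i ↦ h i ∧ f i` and `h i ↦ 0`. -/
noncomputable def cobracket (hA : IsSymmetricGCM A) : LieDerivation ℂ (gA A) (gA A ⊗[ℂ] gA A) :=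
  (exists_cobracket hA).choose

theorem cobracket_Ebar (hA : IsSymmetricGCM A) (i : Fin ℓ) :
    cobracket hA (Ebar A i) = wedge (Hbar A i) (Ebar A i) :=
  (exists_cobracket hA).choose_spec i

end Cobracket

end KacMoody

/-! ### The Casimir scalar -/

namespace KacMoody

open scoped Matrix TensorProduct

section Casimir

variable {ℓ : ℕ} {A : Matrix (Fin ℓ) (Fin ℓ) ℤ} {a c d : Fin ℓ → ℤ} {x y : gA A}

variable (A) in
/-- The scalar `4 ht(c) - 2 (c|c)`, by which the bracket composed with the reduced cobracket acts
on the root space of `c`. -/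
noncomputable def casimir (c : Fin ℓ → ℤ) : ℤ := 4 * ∑ i, c i - 2 * form A c c

theorem casimir_add (hA : IsSymmetricGCM A) (a d : Fin ℓ → ℤ) :
    casimir A (a + d) = casimir A a + casimir A d - 4 * form A a d := by
  simp only [casimir, map_add, LinearMap.add_apply, form_comm hA d a, Pi.add_apply,
    Finset.sum_add_distrib]
  ring

theorem casimir_simpleRoot (hA : IsSymmetricGCM A) (i : Fin ℓ) :
    casimir A (simpleRoot i) = 0 := by
  rw [casimir, form_simpleRoot_left, mulVec_simpleRoot, hA.diag, Finset.sum_pi_single']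
  simp

variable (A) in
/-- The element `∑ c i • h i` of the Cartan subalgebra corresponding to the root `c`. -/
noncomputable def cartan (c : Fin ℓ → ℤ) : gA A := ∑ i, (c i : ℂ) • Hbar A i

theorem cartan_add (a d : Fin ℓ → ℤ) : cartan A (a + d) = cartan A a + cartan A d := by
  simp [cartan, add_smul, Finset.sum_add_distrib]

theorem cartan_simpleRoot (i : Fin ℓ) : cartan A (simpleRoot i) = Hbar A i := by
  simp [cartan, Pi.single_apply]

theorem lie_cartan (a : Fin ℓ → ℤ) (hx : x ∈ rootSpace A d) :
    ⁅cartan A a, x⁆ = (form A a d : ℂ) • x := by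
  simp only [cartan, sum_lie, smul_lie, mem_rootSpace.1 hx, smul_smul, form_apply]
  push_cast
  rw [Finset.sum_smul]

/-- The cobracket corrected by `x ↦ h_c ∧ x`. On the root space of `c` this removes the part of
the cobracket involving the Cartan subalgebra. -/
noncomputable def reducedCobracket (hA : IsSymmetricGCM A) (c : Fin ℓ → ℤ) :
    gA A →ₗ[ℂ] gA A ⊗[ℂ] gA A :=
  (cobracket hA : gA A →ₗ[ℂ] gA A ⊗[ℂ] gA A) - wedge (cartan A c)

theorem reducedCobracket_apply (hA : IsSymmetricGCM A) (c : Fin ℓ → ℤ) (x : gA A) :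
    reducedCobracket hA c x = cobracket hA x - wedge (cartan A c) x :=
  rfl

theorem reducedCobracket_lie (hA : IsSymmetricGCM A) (hx : x ∈ rootSpace A a)
    (hy : y ∈ rootSpace A d) :
    reducedCobracket hA (a + d) ⁅x, y⁆ =
      ⁅x, reducedCobracket hA d y⁆ - ⁅y, reducedCobracket hA a x⁆ -
        (2 * form A a d : ℂ) • wedge x y := by
  have hwedge := lie_wedge_sub_lie_wedge (lie_cartan a hy) (lie_cartan d hx)
  rw [form_comm hA d a, ← two_mul, ← cartan_add, sub_eq_iff_eq_add] at hwedge
  simp only [reducedCobracket_apply, LieDerivation.apply_lie_eq_sub, lie_sub, hwedge]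
  abel

theorem reducedCobracket_Ebar (hA : IsSymmetricGCM A) (i : Fin ℓ) :
    reducedCobracket hA (simpleRoot i) (Ebar A i) = 0 := by
  rw [reducedCobracket_apply, cobracket_Ebar, cartan_simpleRoot, sub_self]

theorem reducedCobracket_lie_Ebar (hA : IsSymmetricGCM A) (i : Fin ℓ) (hx : x ∈ rootSpace A c) :
    reducedCobracket hA (simpleRoot i + c) ⁅Ebar A i, x⁆ =
      ⁅Ebar A i, reducedCobracket hA c x⁆ -
        (2 * form A (simpleRoot i) c : ℂ) • wedge (Ebar A i) x := by
  rw [reducedCobracket_lie hA (Ebar_mem_rootSpace i) hx, reducedCobracket_Ebar, lie_zero, sub_zero]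

section BracketMap

theorem toModuleHom_wedge (x y : gA A) :
    LieModule.toModuleHom ℂ (gA A) (gA A) (wedge x y) = (2 : ℂ) • ⁅x, y⁆ := by
  rw [wedge_apply, map_sub, LieModule.toModuleHom_apply, LieModule.toModuleHom_apply,
    ← lie_skew y x, sub_neg_eq_add, two_smul]

theorem toModuleHom_reducedCobracket (hA : IsSymmetricGCM A) (hdet : A.det ≠ 0) (hc : 0 < c)
    (hx : x ∈ rootSpace A c) :
    LieModule.toModuleHom ℂ (gA A) (gA A) (reducedCobracket hA c x) = (casimir A c : ℂ) • x := by
  have hword {x : gA A} {c : Fin ℓ → ℤ} (hx : IsWord (Ebar A) c x) :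
      LieModule.toModuleHom ℂ (gA A) (gA A) (reducedCobracket hA c x) =
        (casimir A c : ℂ) • x := by
    induction hx with
    | generator i => rw [reducedCobracket_Ebar, casimir_simpleRoot hA, map_zero]; simp
    | @lie i c x hx ih =>
      rw [reducedCobracket_lie_Ebar hA i hx.mem_rootSpace, map_sub, LieModuleHom.map_lie, ih,
        map_smul, toModuleHom_wedge, casimir_add hA, casimir_simpleRoot hA, lie_smul]
      push_cast
      module
  rw [rootSpace_eq_span_words hdet hc] at hx
  exact LinearMap.eqOn_span (f := (LieModule.toModuleHom ℂ (gA A) (gA A) :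
    gA A ⊗[ℂ] gA A →ₗ[ℂ] gA A) ∘ₗ reducedCobracket hA c)
    (g := (casimir A c : ℂ) • LinearMap.id) (fun x hx => hword hx) hx

end BracketMap

section Antisymmetry

theorem comm_lie (x : gA A) (t : gA A ⊗[ℂ] gA A) :
    TensorProduct.comm ℂ _ _ ⁅x, t⁆ = ⁅x, TensorProduct.comm ℂ _ _ t⁆ := by
  induction t with
  | zero => simp
  | add s t hs ht => rw [lie_add, map_add, map_add, lie_add, hs, ht]
  | tmul y z =>
    simp only [TensorProduct.LieModule.lie_tmul_right, map_add, TensorProduct.comm_tmul]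
    exact add_comm _ _

theorem comm_wedge (x y : gA A) : TensorProduct.comm ℂ _ _ (wedge x y) = -wedge x y := by
  simp [wedge_apply]

theorem comm_reducedCobracket (hA : IsSymmetricGCM A) (hdet : A.det ≠ 0) (hc : 0 < c)
    (hx : x ∈ rootSpace A c) :
    TensorProduct.comm ℂ _ _ (reducedCobracket hA c x) = -reducedCobracket hA c x := by
  have hword {x : gA A} {c : Fin ℓ → ℤ} (hx : IsWord (Ebar A) c x) :
      TensorProduct.comm ℂ _ _ (reducedCobracket hA c x) = -reducedCobracket hA c x := by
    induction hx with
    | generator i => rw [reducedCobracket_Ebar, map_zero, neg_zero]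
    | lie i hx ih =>
      rw [reducedCobracket_lie_Ebar hA i hx.mem_rootSpace, map_sub, comm_lie, ih, map_smul,
        comm_wedge, lie_neg, smul_neg, neg_sub_neg, neg_sub]
  rw [rootSpace_eq_span_words hdet hc] at hx
  exact LinearMap.eqOn_span
    (f := (TensorProduct.comm ℂ (gA A) (gA A)).toLinearMap ∘ₗ reducedCobracket hA c)
    (g := -reducedCobracket hA c) (fun x hx => hword hx) hx

end Antisymmetry

section PositiveTensors

variable (A) in
/-- The sum of all `g_p ⊗ g_q` with `p` and `q` positive and `p + q = c`. -/
noncomputable def positiveTensors (c : Fin ℓ → ℤ) : Submodule ℂ (gA A ⊗[ℂ] gA A) :=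
  Submodule.span ℂ {t | ∃ p q, 0 < p ∧ 0 < q ∧ p + q = c ∧
    ∃ u ∈ rootSpace A p, ∃ v ∈ rootSpace A q, u ⊗ₜ v = t}

theorem tmul_mem_positiveTensors (ha : 0 < a) (hd : 0 < d) (hx : x ∈ rootSpace A a)
    (hy : y ∈ rootSpace A d) : x ⊗ₜ y ∈ positiveTensors A (a + d) :=
  Submodule.subset_span ⟨a, d, ha, hd, rfl, x, hx, y, hy, rfl⟩

theorem wedge_mem_positiveTensors (ha : 0 < a) (hd : 0 < d) (hx : x ∈ rootSpace A a)
    (hy : y ∈ rootSpace A d) : wedge x y ∈ positiveTensors A (a + d) :=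
  sub_mem (tmul_mem_positiveTensors ha hd hx hy)
    (add_comm a d ▸ tmul_mem_positiveTensors hd ha hy hx)

theorem lie_mem_positiveTensors (ha : 0 < a) (hx : x ∈ rootSpace A a) {t : gA A ⊗[ℂ] gA A}
    (ht : t ∈ positiveTensors A c) : ⁅x, t⁆ ∈ positiveTensors A (a + c) := by
  refine Submodule.span_le (p := (positiveTensors A (a + c)).comap
    (LieModule.toEnd ℂ (gA A) (gA A ⊗[ℂ] gA A) x)).2 ?_ ht
  rintro _ ⟨p, q, hp, hq, rfl, u, hu, v, hv, rfl⟩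
  rw [SetLike.mem_coe, Submodule.mem_comap, LieModule.toEnd_apply_apply,
    TensorProduct.LieModule.lie_tmul_right]
  refine add_mem ?_ ?_
  · rw [← add_assoc]
    exact tmul_mem_positiveTensors (add_pos ha hp) hq (lie_mem_rootSpace hx hu) hv
  · rw [add_left_comm]
    exact tmul_mem_positiveTensors hp (add_pos ha hq) hu (lie_mem_rootSpace hx hv)

theorem reducedCobracket_mem_positiveTensors (hA : IsSymmetricGCM A) (hdet : A.det ≠ 0)
    (hc : 0 < c) (hx : x ∈ rootSpace A c) : reducedCobracket hA c x ∈ positiveTensors A c := by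
  have hword {x : gA A} {c : Fin ℓ → ℤ} (hx : IsWord (Ebar A) c x) :
      reducedCobracket hA c x ∈ positiveTensors A c := by
    induction hx with
    | generator i => rw [reducedCobracket_Ebar]; exact zero_mem _
    | lie i hx ih =>
      rw [reducedCobracket_lie_Ebar hA i hx.mem_rootSpace]
      have hi := simpleRoot_pos i
      exact sub_mem (lie_mem_positiveTensors hi (Ebar_mem_rootSpace i) ih) <|
        Submodule.smul_mem _ _ <|
          wedge_mem_positiveTensors hi hx.pos (Ebar_mem_rootSpace i) hx.mem_rootSpace
  rw [rootSpace_eq_span_words hdet hc] at hx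
  exact Submodule.span_le (p := (positiveTensors A c).comap (reducedCobracket hA c)).2
    (fun x hx => hword hx) hx

end PositiveTensors

end Casimir

end KacMoody

/-! ### Traces -/

namespace KacMoody

open scoped TensorProduct

section Coordinates

variable {ℓ : ℕ} {A : Matrix (Fin ℓ) (Fin ℓ) ℤ} (hdet : A.det ≠ 0) {c d p q : Fin ℓ → ℤ}
  {x y : gA A}

include hdet in
theorem isInternal_rootSpace : DirectSum.IsInternal (rootSpace A) :=
  DirectSum.isInternal_submodule_of_iSupIndep_of_iSup_eq_top (iSupIndep_rootSpace hdet)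
    iSup_rootSpace

/-- A basis of the root space of `c`. -/
noncomputable def rootBasis (c : Fin ℓ → ℤ) : Module.Basis (Fin (mult A c)) ℂ (rootSpace A c) :=
  haveI := finiteDimensional_rootSpace hdet c
  Module.finBasis ℂ (rootSpace A c)

/-- The vectors of `rootBasis`, as elements of `g(A)`. -/
noncomputable def rootVector (c : Fin ℓ → ℤ) (i : Fin (mult A c)) : gA A := rootBasis hdet c i

/-- The coordinate functions of the basis of `g(A)` formed by all `rootVector`s. -/
noncomputable def rootCoord (c : Fin ℓ → ℤ) (i : Fin (mult A c)) : gA A →ₗ[ℂ] ℂ :=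
  ((isInternal_rootSpace hdet).collectedBasis (rootBasis hdet)).coord ⟨c, i⟩

theorem rootVector_mem (c : Fin ℓ → ℤ) (i : Fin (mult A c)) :
    rootVector hdet c i ∈ rootSpace A c :=
  (rootBasis hdet c i).2

theorem rootCoord_eq_zero (hcd : c ≠ d) (hx : x ∈ rootSpace A c) (i : Fin (mult A d)) :
    rootCoord hdet d i x = 0 :=
  (isInternal_rootSpace hdet).collectedBasis_repr_of_mem_ne (rootBasis hdet) hcd hx

theorem rootCoord_eq_repr (hx : x ∈ rootSpace A c) (i : Fin (mult A c)) :
    rootCoord hdet c i x = (rootBasis hdet c).repr ⟨x, hx⟩ i :=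
  (isInternal_rootSpace hdet).collectedBasis_repr_of_mem (rootBasis hdet) hx

theorem sum_rootCoord_smul_rootVector (hx : x ∈ rootSpace A c) :
    ∑ i, rootCoord hdet c i x • rootVector hdet c i = x := by
  have hsum := congrArg (rootSpace A c).subtype ((rootBasis hdet c).sum_repr ⟨x, hx⟩)
  rw [map_sum] at hsum
  simp only [rootCoord_eq_repr hdet hx]
  exact hsum

theorem rootCoord_rootVector (c : Fin ℓ → ℤ) (i j : Fin (mult A c)) :
    rootCoord hdet c i (rootVector hdet c j) = if i = j then 1 else 0 := by
  rw [rootCoord_eq_repr hdet (rootVector_mem hdet c j)]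
  simp [rootVector, Finsupp.single_apply, eq_comm]

/-- The coordinate functions of the basis of `g(A) ⊗ g(A)` formed by the tensor products of
`rootVector`s. -/
noncomputable def tensorCoord (p q : Fin ℓ → ℤ) (i : Fin (mult A p)) (j : Fin (mult A q)) :
    gA A ⊗[ℂ] gA A →ₗ[ℂ] ℂ :=
  LinearMap.mul' ℂ ℂ ∘ₗ TensorProduct.map (rootCoord hdet p i) (rootCoord hdet q j)

theorem tensorCoord_tmul (i : Fin (mult A p)) (j : Fin (mult A q)) (u v : gA A) :
    tensorCoord hdet p q i j (u ⊗ₜ v) = rootCoord hdet p i u * rootCoord hdet q j v :=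
  rfl

theorem tensorCoord_comm (i : Fin (mult A p)) (j : Fin (mult A q)) (t : gA A ⊗[ℂ] gA A) :
    tensorCoord hdet p q i j (TensorProduct.comm ℂ _ _ t) = tensorCoord hdet q p j i t := by
  induction t with
  | zero => simp
  | add s t hs ht => simp only [map_add, hs, ht]
  | tmul u v => rw [TensorProduct.comm_tmul, tensorCoord_tmul, tensorCoord_tmul, mul_comm]

theorem eq_of_mem_positiveTensors {V : Type*} [AddCommGroup V] [Module ℂ V]
    {f g : gA A ⊗[ℂ] gA A →ₗ[ℂ] V} {t : gA A ⊗[ℂ] gA A} (ht : t ∈ positiveTensors A c)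
    (hfg : ∀ p q, 0 < p → 0 < q → p + q = c → ∀ u ∈ rootSpace A p, ∀ v ∈ rootSpace A q,
      f (u ⊗ₜ v) = g (u ⊗ₜ v)) : f t = g t := by
  refine LinearMap.eqOn_span ?_ ht
  rintro _ ⟨p, q, hp, hq, hpq, u, hu, v, hv, rfl⟩
  exact hfg p q hp hq hpq u hu v hv

theorem tensorCoord_eq_zero {t : gA A ⊗[ℂ] gA A} (ht : t ∈ positiveTensors A c)
    (hpq : ¬(0 < p ∧ 0 < q)) (i : Fin (mult A p)) (j : Fin (mult A q)) :
    tensorCoord hdet p q i j t = 0 := by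
  refine eq_of_mem_positiveTensors (g := 0) ht fun a d ha hd _ u hu v hv => ?_
  rw [tensorCoord_tmul, LinearMap.zero_apply]
  by_cases hap : a = p
  · have hdq : d ≠ q := by
      rintro rfl
      exact hpq ⟨hap ▸ ha, hd⟩
    rw [rootCoord_eq_zero hdet hdq hv, mul_zero]
  · rw [rootCoord_eq_zero hdet hap hu, zero_mul]

theorem toModuleHom_eq_sum {t : gA A ⊗[ℂ] gA A} (ht : t ∈ positiveTensors A c) :
    LieModule.toModuleHom ℂ (gA A) (gA A) t = ∑ p ∈ Finset.Icc 0 c, ∑ i, ∑ j,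
      tensorCoord hdet p (c - p) i j t • ⁅rootVector hdet p i, rootVector hdet (c - p) j⁆ := by
  suffices LieModule.toModuleHom ℂ (gA A) (gA A) t =
      (∑ p ∈ Finset.Icc 0 c, ∑ i, ∑ j, (tensorCoord hdet p (c - p) i j).smulRight
        ⁅rootVector hdet p i, rootVector hdet (c - p) j⁆) t by
    simpa only [LinearMap.sum_apply, LinearMap.smulRight_apply] using this
  refine eq_of_mem_positiveTensors (f := (LieModule.toModuleHom ℂ (gA A) (gA A) :
    gA A ⊗[ℂ] gA A →ₗ[ℂ] gA A)) ht ?_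
  rintro a d ha hd rfl u hu v hv
  simp only [LinearMap.sum_apply, LinearMap.smulRight_apply, tensorCoord_tmul]
  rw [Finset.sum_eq_single a]
  · rw [add_sub_cancel_left]
    change ⁅u, v⁆ = _
    conv_lhs =>
      rw [← sum_rootCoord_smul_rootVector hdet hu, ← sum_rootCoord_smul_rootVector hdet hv, sum_lie]
    simp only [lie_sum, smul_lie, lie_smul, smul_smul, mul_comm]
  · intro p _ hp
    simp only [rootCoord_eq_zero hdet hp.symm hu, zero_mul, zero_smul, Finset.sum_const_zero]
  · exact fun ha' => absurd (Finset.mem_Icc.2 ⟨ha.le, le_add_of_nonneg_right hd.le⟩) ha'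

theorem tensorCoord_lie (hy : y ∈ rootSpace A p) {t : gA A ⊗[ℂ] gA A}
    (ht : t ∈ positiveTensors A q) (i : Fin (mult A p)) (j : Fin (mult A q)) :
    tensorCoord hdet p q i j ⁅y, t⁆ = ∑ l, tensorCoord hdet p (q - p) i l t *
      rootCoord hdet q j ⁅y, rootVector hdet (q - p) l⁆ := by
  suffices (tensorCoord hdet p q i j ∘ₗ LieModule.toEnd ℂ (gA A) (gA A ⊗[ℂ] gA A) y) t =
      (∑ l, (tensorCoord hdet p (q - p) i l).smulRight
        (rootCoord hdet q j ⁅y, rootVector hdet (q - p) l⁆)) t by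
    simpa only [LinearMap.sum_apply, LinearMap.smulRight_apply, smul_eq_mul,
      LinearMap.comp_apply, LieModule.toEnd_apply_apply] using this
  refine eq_of_mem_positiveTensors ht ?_
  rintro a d ha - rfl u hu v hv
  have hda : d ≠ a + d := (lt_add_of_pos_left d ha).ne
  simp only [LinearMap.comp_apply, LieModule.toEnd_apply_apply, LinearMap.sum_apply,
    LinearMap.smulRight_apply, TensorProduct.LieModule.lie_tmul_right, map_add, tensorCoord_tmul,
    rootCoord_eq_zero hdet hda hv, mul_zero, zero_add, smul_eq_mul, mul_assoc, ← Finset.mul_sum]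
  by_cases hap : a = p
  · subst hap
    rw [add_sub_cancel_left]
    conv_lhs => rw [← sum_rootCoord_smul_rootVector hdet hv]
    simp only [lie_sum, map_sum, lie_smul, map_smul, smul_eq_mul]
  · rw [rootCoord_eq_zero hdet hap hu, zero_mul, zero_mul]

end Coordinates

section Trace

variable {ℓ : ℕ} {A : Matrix (Fin ℓ) (Fin ℓ) ℤ} (hA : IsSymmetricGCM A) (hdet : A.det ≠ 0)
  {c p q : Fin ℓ → ℤ} {x : gA A}

theorem apply_reducedCobracket_eq_sum (hx : x ∈ rootSpace A c) (φ : gA A ⊗[ℂ] gA A →ₗ[ℂ] ℂ) :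
    φ (reducedCobracket hA c x) = ∑ k, φ (reducedCobracket hA c (rootVector hdet c k)) *
      rootCoord hdet c k x := by
  conv_lhs => rw [← sum_rootCoord_smul_rootVector hdet hx]
  simp only [map_sum, map_smul, smul_eq_mul, mul_comm]

/-- The trace on `g_p ⊗ g_q` of the bracket followed by the reduced cobracket and the projection
to `g_p ⊗ g_q`. -/
noncomputable def trace (p q : Fin ℓ → ℤ) : ℂ :=
  ∑ i, ∑ j, tensorCoord hdet p q i j
    (reducedCobracket hA (p + q) ⁅rootVector hdet p i, rootVector hdet q j⁆)

theorem trace_eq_zero_of_mult (hpq : mult A p = 0 ∨ mult A q = 0) : trace hA hdet p q = 0 := by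
  rw [trace]
  rcases hpq with hp | hq
  · have : IsEmpty (Fin (mult A p)) := by rw [hp]; infer_instance
    exact Finset.sum_of_isEmpty _
  · have : IsEmpty (Fin (mult A q)) := by rw [hq]; infer_instance
    exact Finset.sum_eq_zero fun i _ => Finset.sum_of_isEmpty _

theorem trace_eq_zero_of_not_pos (hpos : 0 < p + q) (hpq : ¬(0 < p ∧ 0 < q)) :
    trace hA hdet p q = 0 :=
  Finset.sum_eq_zero fun i _ => Finset.sum_eq_zero fun j _ =>
    tensorCoord_eq_zero hdet (reducedCobracket_mem_positiveTensors hA hdet hpos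
      (lie_mem_rootSpace (rootVector_mem hdet p i) (rootVector_mem hdet q j))) hpq i j

theorem trace_sub_eq_zero (hq : 0 < q) (hpq : ¬p < q) : trace hA hdet p (q - p) = 0 :=
  trace_eq_zero_of_not_pos hA hdet (by rwa [add_sub_cancel]) fun h => hpq (sub_pos.1 h.2)

theorem trace_eq_sum (hpq : p + q = c) :
    trace hA hdet p q = ∑ i, ∑ j, ∑ k,
      tensorCoord hdet p q i j (reducedCobracket hA c (rootVector hdet c k)) *
        rootCoord hdet c k ⁅rootVector hdet p i, rootVector hdet q j⁆ := by
  subst hpq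
  exact Finset.sum_congr rfl fun i _ => Finset.sum_congr rfl fun j _ =>
    apply_reducedCobracket_eq_sum hA hdet
      (lie_mem_rootSpace (rootVector_mem hdet p i) (rootVector_mem hdet q j)) _

theorem casimir_mul_mult (hc : 0 < c) :
    (casimir A c : ℂ) * mult A c = ∑ p ∈ Finset.Icc 0 c, trace hA hdet p (c - p) := by
  calc (casimir A c : ℂ) * mult A c
      = ∑ k, rootCoord hdet c k (LieModule.toModuleHom ℂ (gA A) (gA A)
          (reducedCobracket hA c (rootVector hdet c k))) := by
        simp only [toModuleHom_reducedCobracket hA hdet hc (rootVector_mem hdet c _), map_smul,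
          rootCoord_rootVector]
        simp [mul_comm]
    _ = ∑ k, ∑ p ∈ Finset.Icc 0 c, ∑ i, ∑ j,
          tensorCoord hdet p (c - p) i j (reducedCobracket hA c (rootVector hdet c k)) *
            rootCoord hdet c k ⁅rootVector hdet p i, rootVector hdet (c - p) j⁆ := by
        simp only [toModuleHom_eq_sum hdet (reducedCobracket_mem_positiveTensors hA hdet hc
          (rootVector_mem hdet c _)), map_sum, map_smul, smul_eq_mul]
    _ = ∑ p ∈ Finset.Icc 0 c, trace hA hdet p (c - p) := by
        rw [Finset.sum_comm]
        refine Finset.sum_congr rfl fun p _ => ?_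
        rw [trace_eq_sum hA hdet (add_sub_cancel p c), Finset.sum_comm]
        exact Finset.sum_congr rfl fun i _ => Finset.sum_comm

theorem sum_tensorCoord_lie_reducedCobracket_right (hq : 0 < q) :
    ∑ i, ∑ j, tensorCoord hdet p q i j
      ⁅rootVector hdet p i, reducedCobracket hA q (rootVector hdet q j)⁆ =
      trace hA hdet p (q - p) := by
  rw [trace_eq_sum hA hdet (add_sub_cancel p q)]
  refine Finset.sum_congr rfl fun i _ => ?_
  rw [Finset.sum_comm]
  exact Finset.sum_congr rfl fun j _ => tensorCoord_lie hdet (rootVector_mem hdet p i)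
    (reducedCobracket_mem_positiveTensors hA hdet hq (rootVector_mem hdet q j)) i j

theorem sum_tensorCoord_lie_reducedCobracket_left (hp : 0 < p) :
    ∑ i, ∑ j, tensorCoord hdet p q i j
      ⁅rootVector hdet q j, reducedCobracket hA p (rootVector hdet p i)⁆ =
      -trace hA hdet q (p - q) := by
  rw [← sum_tensorCoord_lie_reducedCobracket_right hA hdet hp, Finset.sum_comm]
  simp only [← Finset.sum_neg_distrib]
  refine Finset.sum_congr rfl fun j _ => Finset.sum_congr rfl fun i _ => ?_
  rw [← tensorCoord_comm, comm_lie, comm_reducedCobracket hA hdet hp (rootVector_mem hdet p i),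
    lie_neg, map_neg]

theorem sum_tensorCoord_wedge (p q : Fin ℓ → ℤ) :
    ∑ i, ∑ j, tensorCoord hdet p q i j (wedge (rootVector hdet p i) (rootVector hdet q j)) =
      (mult A p * mult A q : ℂ) - if p = q then (mult A p : ℂ) else 0 := by
  simp only [wedge_apply, map_sub, tensorCoord_tmul, rootCoord_rootVector]
  by_cases hpq : p = q
  · subst hpq
    simp [rootCoord_rootVector, Finset.sum_sub_distrib]
  · simp [hpq, rootCoord_eq_zero hdet (Ne.symm hpq) (rootVector_mem hdet q _)]

theorem trace_eq (hp : 0 < p) (hq : 0 < q) :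
    trace hA hdet p q =
      -(2 * form A p q : ℂ) * ((mult A p * mult A q : ℂ) - if p = q then (mult A p : ℂ) else 0) +
        trace hA hdet p (q - p) + trace hA hdet q (p - q) := by
  have hright := sum_tensorCoord_lie_reducedCobracket_right hA hdet (p := p) hq
  have hleft := sum_tensorCoord_lie_reducedCobracket_left hA hdet (q := q) hp
  rw [← sum_tensorCoord_wedge hdet, ← hright, ← neg_eq_iff_eq_neg.2 hleft, trace]
  simp only [reducedCobracket_lie hA (rootVector_mem hdet p _) (rootVector_mem hdet q _), map_sub,
    map_smul, smul_eq_mul, Finset.sum_sub_distrib, ← Finset.mul_sum]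
  ring

end Trace

end KacMoody

/-! ### The algebra `𝔉` -/

namespace KacMoody

theorem isSymmetricGCM_AF : IsSymmetricGCM AF where
  diag := by decide
  nonpos := by simp [AF, Fin.forall_fin_succ]
  symm := by simp [AF, Fin.forall_fin_succ]

theorem det_AF_ne_zero : AF.det ≠ 0 := by decide

/-- The element `aα₁ + bα₂ + cα₃` of the root lattice of `𝔉`, for a triple `(a, b, c)`. -/
def root (p : ℕ × ℕ × ℕ) : Fin 3 → ℤ := ![p.1, p.2.1, p.2.2]

/-- The height `a + b + c` of `aα₁ + bα₂ + cα₃`. -/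
def height (p : ℕ × ℕ × ℕ) : ℕ := p.1 + p.2.1 + p.2.2

/-- The form of `𝔉` on triples. It is written with the operations which the kernel evaluates on
numerals, as are `tableMult` and `tripleLE`, since the whole recursion is evaluated there. -/
def rootForm (p q : ℕ × ℕ × ℕ) : ℤ :=
  .subNatNat (.mul 2 (.add (.mul p.1 q.1) (.add (.mul p.2.1 q.2.1) (.mul p.2.2 q.2.2))))
    (.add (.mul 2 (.add (.mul p.1 q.2.1) (.mul p.2.1 q.1)))
      (.add (.mul p.2.1 q.2.2) (.mul p.2.2 q.2.1)))

section Root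

variable {p q : ℕ × ℕ × ℕ}

theorem root_le_root : root p ≤ root q ↔ p ≤ q := by
  simp [root, Pi.le_def, Fin.forall_fin_succ, Prod.le_def]

theorem root_injective : Function.Injective root := fun _ _ h =>
  le_antisymm (root_le_root.1 h.le) (root_le_root.1 h.ge)

theorem root_lt_root : root p < root q ↔ p < q := by
  simp only [lt_iff_le_not_ge, root_le_root]

theorem root_zero : root 0 = 0 := by
  ext i; fin_cases i <;> rfl

theorem root_pos : 0 < root p ↔ 0 < p := by
  rw [← root_zero, root_lt_root]

theorem root_add (p q : ℕ × ℕ × ℕ) : root (p + q) = root p + root q := by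
  ext i; fin_cases i <;> simp [root]

theorem root_sub (h : q ≤ p) : root (p - q) = root p - root q := by
  rw [eq_sub_iff_add_eq, ← root_add, tsub_add_cancel_of_le h]

theorem exists_root_eq {c : Fin 3 → ℤ} (hc : 0 ≤ c) : ∃ p, root p = c := by
  refine ⟨((c 0).toNat, (c 1).toNat, (c 2).toNat), ?_⟩
  ext i; fin_cases i <;> simpa [root] using hc _

theorem sum_Icc_root {M : Type*} [AddCommMonoid M] (f : (Fin 3 → ℤ) → M) (p : ℕ × ℕ × ℕ) :
    ∑ c ∈ Finset.Icc 0 (root p), f c = ∑ q ∈ Finset.Icc 0 p, f (root q) := by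
  symm
  refine Finset.sum_nbij root (fun q hq => ?_) root_injective.injOn (fun c hc => ?_)
    fun _ _ => rfl
  · rw [Finset.mem_Icc] at hq ⊢
    exact ⟨root_zero ▸ root_le_root.2 hq.1, root_le_root.2 hq.2⟩
  · obtain ⟨hpos, hle⟩ := Finset.mem_Icc.1 hc
    obtain ⟨q, rfl⟩ := exists_root_eq hpos
    exact ⟨q, Finset.mem_coe.2 (Finset.mem_Icc.2 ⟨zero_le, root_le_root.1 hle⟩), rfl⟩

theorem form_root (p q : ℕ × ℕ × ℕ) : form AF (root p) (root q) = rootForm p q := by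
  simp only [rootForm, Int.subNatNat_eq_coe, Nat.mul_eq, Nat.add_eq]
  simp [form_apply, AF, root, Fin.sum_univ_three]
  ring

theorem casimir_root (p : ℕ × ℕ × ℕ) : casimir AF (root p) = 4 * height p - 2 * rootForm p p := by
  rw [casimir, form_root]
  simp [root, height, Fin.sum_univ_three]

theorem casimir_root_ne_zero (hp : 1 < height p) (hform : rootForm p p ≤ 2) :
    casimir AF (root p) ≠ 0 := by
  rw [casimir_root]
  omega

theorem height_add (p q : ℕ × ℕ × ℕ) : height (p + q) = height p + height q := by
  simp only [height, Prod.fst_add, Prod.snd_add]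
  ring

theorem height_pos (hp : 0 < p) : 0 < height p := by
  contrapose! hp
  obtain ⟨⟨ha, hb⟩, hc⟩ : (p.1 = 0 ∧ p.2.1 = 0) ∧ p.2.2 = 0 := by simpa [height] using hp
  exact (Prod.ext ha (Prod.ext hb hc) : p = 0).not_gt

theorem exists_simpleRoot_eq (hp : height p = 1) : ∃ i, root p = simpleRoot i := by
  obtain ⟨a, b, c⟩ := p
  have : a = 1 ∧ b = 0 ∧ c = 0 ∨ a = 0 ∧ b = 1 ∧ c = 0 ∨ a = 0 ∧ b = 0 ∧ c = 1 := by
    simp only [height] at hp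
    omega
  rcases this with ⟨rfl, rfl, rfl⟩ | ⟨rfl, rfl, rfl⟩ | ⟨rfl, rfl, rfl⟩
  exacts [⟨0, by decide⟩, ⟨1, by decide⟩, ⟨2, by decide⟩]

theorem trace_root (hp : 0 < p) (hq : 0 < q) :
    trace isSymmetricGCM_AF det_AF_ne_zero (root p) (root q) =
      -(2 * rootForm p q : ℂ) * ((mult AF (root p) * mult AF (root q) : ℂ) -
          if p = q then (mult AF (root p) : ℂ) else 0) +
        if p ≤ q then trace isSymmetricGCM_AF det_AF_ne_zero (root p) (root (q - p))
        else if q ≤ p then trace isSymmetricGCM_AF det_AF_ne_zero (root q) (root (p - q))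
        else 0 := by
  have hp' := root_pos.2 hp
  have hq' := root_pos.2 hq
  rw [trace_eq _ _ hp' hq', add_assoc, form_root]
  congr 1
  · simp only [root_injective.eq_iff]
  split_ifs with hple hqle
  · rw [root_sub hple, trace_sub_eq_zero _ _ hp' fun h => (root_lt_root.1 h).not_ge hple,
      add_zero]
  · rw [root_sub hqle, trace_sub_eq_zero _ _ hq' fun h => hple (root_lt_root.1 h).le, zero_add]
  · rw [trace_sub_eq_zero _ _ hq' fun h => hple (root_lt_root.1 h).le,
      trace_sub_eq_zero _ _ hp' fun h => hqle (root_lt_root.1 h).le, add_zero]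

end Root

end KacMoody

/-! ### Kernel evaluation of the recursion -/

namespace KacMoody

/-- The multiplicities of `𝔉`: entry `c` of row `b` of plane `a` is `mult(a, b, c)`, for `a ≤ 11`,
`b ≤ 14` and `c ≤ 7`, missing entries being `0`. The numbers were found by running the recursion
of `trace_eq`; they are only claims until `mult_root`. -/
def multTable : List (List (List ℕ)) :=
   [[[0, 1], [1, 1]],
    [[1], [1, 1], [1, 1, 1]],
    [[], [1, 1], [1, 2, 1], [1, 2, 2, 1], [0, 1, 1, 1]],
    [[], [], [1, 1, 1], [1, 3, 3, 1], [1, 3, 5, 3, 1], [0, 1, 3, 3, 1], [0, 0, 1, 1, 1]],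
    [[], [], [], [1, 2, 2, 1], [1, 5, 7, 5, 1], [1, 5, 11, 11, 5, 1], [0, 2, 7, 11, 7, 2],
     [0, 0, 2, 5, 5, 2], [0, 0, 0, 1, 1, 1]],
    [[], [], [], [], [1, 3, 5, 3, 1], [1, 7, 15, 15, 7, 1], [1, 7, 22, 30, 22, 7, 1],
     [0, 3, 15, 30, 30, 15, 3], [0, 0, 5, 15, 22, 15, 5], [0, 0, 0, 3, 7, 7, 3],
     [0, 0, 0, 0, 1, 1, 1]],
    [[], [], [], [], [0, 1, 1, 1], [1, 5, 11, 11, 5, 1], [1, 11, 30, 42, 30, 11, 1],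
     [1, 11, 42, 77, 77, 42, 11, 1], [0, 5, 30, 77, 101, 77, 30, 5],
     [0, 1, 11, 42, 77, 77, 42, 11], [0, 0, 1, 11, 30, 42, 30, 11], [0, 0, 0, 1, 5, 11, 11, 5],
     [0, 0, 0, 0, 0, 1, 1, 1]],
    [[], [], [], [], [], [0, 1, 3, 3, 1], [1, 7, 22, 30, 22, 7, 1],
     [1, 15, 56, 101, 101, 56, 15, 1], [1, 15, 77, 176, 231, 176, 77, 15],
     [0, 7, 56, 176, 297, 297, 176, 56], [0, 1, 22, 101, 231, 297, 231, 101],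
     [0, 0, 3, 30, 101, 176, 176, 101], [0, 0, 0, 3, 22, 56, 77, 56], [0, 0, 0, 0, 1, 7, 15, 15],
     [0, 0, 0, 0, 0, 0, 1, 1]],
    [[], [], [], [], [], [], [0, 2, 7, 11, 7, 2], [1, 11, 42, 77, 77, 42, 11, 1],
     [1, 22, 101, 231, 297, 231, 101, 22], [1, 22, 135, 385, 627, 627, 385, 135],
     [0, 11, 101, 385, 792, 1002, 792, 385], [0, 2, 42, 231, 627, 1002, 1002, 627],
     [0, 0, 7, 77, 297, 627, 792, 627], [0, 0, 0, 11, 77, 231, 385, 385],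
     [0, 0, 0, 0, 7, 42, 101, 135]],
    [[], [], [], [], [], [], [0, 0, 1, 1, 1], [0, 3, 15, 30, 30, 15, 3],
     [1, 15, 77, 176, 231, 176, 77, 15], [1, 30, 176, 490, 792, 792, 490, 176],
     [1, 30, 231, 792, 1574, 1957, 1574, 792], [0, 15, 176, 792, 1957, 3007, 3007, 1957],
     [0, 3, 77, 490, 1574, 3007, 3712, 3007], [0, 0, 15, 176, 792, 1957, 3007, 3007],
     [0, 0, 1, 30, 231, 792, 1574, 1957]],
    [[], [], [], [], [], [], [], [0, 0, 2, 5, 5, 2], [0, 5, 30, 77, 101, 77, 30, 5],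
     [1, 22, 135, 385, 627, 627, 385, 135], [1, 42, 297, 1002, 1957, 2434, 1957, 1002],
     [1, 42, 385, 1574, 3713, 5593, 5593, 3713], [0, 22, 297, 1574, 4557, 8326, 10111, 8326],
     [0, 5, 135, 1002, 3713, 8326, 12266, 12266], [0, 0, 30, 385, 1957, 5593, 10111, 12266]],
    [[], [], [], [], [], [], [], [], [0, 0, 5, 15, 22, 15, 5],
     [0, 7, 56, 176, 297, 297, 176, 56], [1, 30, 231, 792, 1574, 1957, 1574, 792],
     [1, 56, 490, 1956, 4557, 6826, 6826, 4557], [1, 56, 626, 3005, 8322, 14821, 17892, 14821],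
     [0, 30, 490, 3005, 10108, 21525, 30993, 30993],
     [0, 7, 231, 1956, 8322, 21525, 37083, 44258]]]

/-- `multTable` with all entries packed in one numeral, `16` bits each, to be looked up by a
shift. -/
def packedTable : ℕ :=
  Nat.ofDigits (2 ^ 1920) (multTable.map fun plane =>
    Nat.ofDigits (2 ^ 128) (plane.map (Nat.ofDigits (2 ^ 16))))

/-- The entry of `multTable` for `aα₁ + bα₂ + cα₃`. -/
def tableMult (p : ℕ × ℕ × ℕ) : ℕ :=
  .mod (.shiftRight packedTable (.mul 16 (.add (.mul 8 (.add (.mul 15 p.1) p.2.1)) p.2.2))) 65536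

/-- The order of triples, as a Boolean test. -/
def tripleLE (p q : ℕ × ℕ × ℕ) : Bool :=
  p.1.ble q.1 && (p.2.1.ble q.2.1 && p.2.2.ble q.2.2)

/-- The value of `trace` that `trace_eq` yields for the multiplicities in `tableMult`. The
argument `n` bounds the number of recursion steps; `height (p + q)` steps always suffice. -/
def tableTrace (n : ℕ) : ℕ × ℕ × ℕ → ℕ × ℕ × ℕ → ℤ :=
  n.rec (fun _ _ => 0) fun _ ih p q =>
    bif (tableMult p).beq 0 || (tableMult q).beq 0 then 0 else
      -(2 * rootForm p q) *
          (tableMult p * tableMult q - if p = q then tableMult p else 0 : ℕ) +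
        bif tripleLE p q then ih p (q.1 - p.1, q.2.1 - p.2.1, q.2.2 - p.2.2)
        else bif tripleLE q p then ih q (p.1 - q.1, p.2.1 - q.2.1, p.2.2 - q.2.2)
        else 0

/-- The sum `∑ i < n, f i`, by recursion on `n`. -/
def sumBelow (n : ℕ) (f : ℕ → ℤ) : ℤ := n.rec 0 fun i s => s + f i

/-- The sum of `tableTrace` over all decompositions of `p`. -/
def tableTraceSum (p : ℕ × ℕ × ℕ) : ℤ :=
  sumBelow (p.1 + 1) fun a => sumBelow (p.2.1 + 1) fun b => sumBelow (p.2.2 + 1) fun c =>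
    tableTrace (height p) (a, b, c) (p.1 - a, p.2.1 - b, p.2.2 - c)

/-- The entry of `multTable` at `p` agrees with the bound on the norm of a root, with the
multiplicity one of the simple roots, or with the recursion `casimir_mul_mult`. -/
def IsConsistent (p : ℕ × ℕ × ℕ) : Prop :=
  if 2 < rootForm p p then tableMult p = 0
  else if height p = 1 then tableMult p = 1
  else (4 * height p - 2 * rootForm p p) * tableMult p = tableTraceSum p

instance : DecidablePred IsConsistent := fun p => by unfold IsConsistent; infer_instance

set_option maxRecDepth 100000 in
theorem isConsistent_of_lt : ∀ a < 12, ∀ b < 15, ∀ c < 8, IsConsistent (a, b, c) := by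
  decide +kernel

end KacMoody

/-! ### Soundness of the evaluation -/

namespace KacMoody

theorem isConsistent_of_le {p : ℕ × ℕ × ℕ} (hp : p ≤ (11, 14, 7)) : IsConsistent p :=
  isConsistent_of_lt p.1 (Nat.lt_succ_of_le hp.1) p.2.1 (Nat.lt_succ_of_le hp.2.1) p.2.2
    (Nat.lt_succ_of_le hp.2.2)

theorem tableMult_zero : tableMult 0 = 0 := by decide +kernel

theorem tripleLE_eq_true {p q : ℕ × ℕ × ℕ} : tripleLE p q = true ↔ p ≤ q := by
  simp [tripleLE, Prod.le_def]

theorem tableTrace_succ (n : ℕ) (p q : ℕ × ℕ × ℕ) :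
    tableTrace (n + 1) p q =
      if tableMult p = 0 ∨ tableMult q = 0 then 0 else
        -(2 * rootForm p q) *
            (tableMult p * tableMult q - (if p = q then tableMult p else 0 : ℕ)) +
          if p ≤ q then tableTrace n p (q - p)
          else if q ≤ p then tableTrace n q (p - q) else 0 := by
  have hle : (if p = q then tableMult p else 0) ≤ tableMult p * tableMult q := by
    split_ifs with h
    exacts [h ▸ Nat.le_mul_self _, Nat.zero_le _]
  simp only [← tripleLE_eq_true, ← Nat.beq_eq, ← Bool.or_eq_true, ← Bool.cond_eq_ite]
  rw [← Nat.cast_mul, ← Nat.cast_sub hle]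
  rfl

theorem sumBelow_eq_sum (n : ℕ) (f : ℕ → ℤ) :
    sumBelow n f = ∑ i ∈ Finset.range n, f i := by
  induction n with
  | zero => rfl
  | succ n ih => rw [Finset.sum_range_succ, ← ih]; rfl

theorem tableTraceSum_eq_sum (p : ℕ × ℕ × ℕ) :
    tableTraceSum p = ∑ q ∈ Finset.Icc 0 p, tableTrace (height p) q (p - q) := by
  simp only [tableTraceSum, sumBelow_eq_sum, Nat.range_succ_eq_Icc_zero]
  rw [← Finset.Icc_product_Icc, Finset.sum_product]
  refine Finset.sum_congr rfl fun a _ => ?_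
  rw [← Finset.Icc_product_Icc, Finset.sum_product]
  rfl

section Soundness

variable {p q s : ℕ × ℕ × ℕ}

theorem trace_root_eq_tableTrace
    (htable : ∀ r, 0 < r → r < s → mult AF (root r) = tableMult r) {n : ℕ}
    (hpos : 0 < p + q) (hle : p + q ≤ s) (hn : height (p + q) ≤ n) :
    trace isSymmetricGCM_AF det_AF_ne_zero (root p) (root q) = tableTrace n p q := by
  induction n generalizing p q with
  | zero => exact absurd (height_pos hpos) hn.not_gt
  | succ n ih =>
    rw [tableTrace_succ]
    by_cases hpq : 0 < p ∧ 0 < q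
    · obtain ⟨hp, hq⟩ := hpq
      have htabp := htable p hp ((lt_add_of_pos_right p hq).trans_le hle)
      have htabq := htable q hq ((lt_add_of_pos_left q hp).trans_le hle)
      have hheightp := height_pos hp
      have hheightq := height_pos hq
      rw [height_add] at hn
      by_cases hzero : tableMult p = 0 ∨ tableMult q = 0
      · rw [if_pos hzero, Int.cast_zero]
        rw [← htabp, ← htabq] at hzero
        exact trace_eq_zero_of_mult _ _ hzero
      rw [if_neg hzero, trace_root hp hq, htabp, htabq]
      push_cast
      congr 1
      split_ifs with hple hqle
      · refine ih ?_ ?_ ?_ <;> rw [add_tsub_cancel_of_le hple]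
        exacts [hq, le_add_self.trans hle, by omega]
      · refine ih ?_ ?_ ?_ <;> rw [add_tsub_cancel_of_le hqle]
        exacts [hp, le_self_add.trans hle, by omega]
      · rfl
    · have hzero : tableMult p = 0 ∨ tableMult q = 0 := by
        simp only [not_and_or, pos_iff_ne_zero, not_not] at hpq
        rcases hpq with rfl | rfl
        exacts [.inl tableMult_zero, .inr tableMult_zero]
      rw [if_pos hzero, Int.cast_zero]
      refine trace_eq_zero_of_not_pos _ _ (root_add p q ▸ root_pos.2 hpos) ?_
      rwa [root_pos, root_pos]

theorem casimir_mul_mult_root (htable : ∀ r, 0 < r → r < s → mult AF (root r) = tableMult r)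
    (hs : 0 < s) : (casimir AF (root s) : ℂ) * mult AF (root s) = tableTraceSum s := by
  rw [casimir_mul_mult isSymmetricGCM_AF det_AF_ne_zero (root_pos.2 hs), sum_Icc_root,
    tableTraceSum_eq_sum, Int.cast_sum]
  refine Finset.sum_congr rfl fun q hq => ?_
  have hqs : q + (s - q) = s := add_tsub_cancel_of_le (Finset.mem_Icc.1 hq).2
  rw [← root_sub (Finset.mem_Icc.1 hq).2]
  exact trace_root_eq_tableTrace htable (hqs.symm ▸ hs) hqs.le (by rw [hqs])

theorem mult_root (hs : s ≠ 0) (hle : s ≤ (11, 14, 7)) : mult AF (root s) = tableMult s := by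
  rw [← pos_iff_ne_zero] at hs
  induction s using WellFoundedLT.induction with | _ s ih
  have htable (r) (hr : 0 < r) (hrs : r < s) : mult AF (root r) = tableMult r :=
    ih r hrs hr (hrs.le.trans hle)
  have hcheck := isConsistent_of_le hle
  rw [IsConsistent] at hcheck
  split_ifs at hcheck with hform hheight
  · rw [hcheck, mult_eq_zero det_AF_ne_zero]
    by_contra hne
    exact (form_self_le_two isSymmetricGCM_AF det_AF_ne_zero (root_pos.2 hs) hne).not_gt
      (form_root s s ▸ hform)
  · obtain ⟨i, hi⟩ := exists_simpleRoot_eq hheight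
    rw [hcheck, hi, mult_simpleRoot isSymmetricGCM_AF det_AF_ne_zero]
  · have hheight' : 1 < height s := lt_of_le_of_ne (height_pos hs) (Ne.symm hheight)
    have hcas := casimir_root_ne_zero hheight' (not_lt.1 hform)
    have hsum := casimir_mul_mult_root htable hs
    rw [← hcheck, ← casimir_root, Int.cast_mul, Int.cast_natCast] at hsum
    exact_mod_cast mul_left_cancel₀ (Int.cast_ne_zero.2 hcas) hsum

end Soundness

end KacMoody

/-- For `𝔉 = g(A_F)`, writing `(a,b,c)` for `α = aα₁ + bα₂ + cα₃`:
`mult(7,7,2) = 56`, `mult(8,10,4) = 792`, `mult(10,10,5) = 2434`, `mult(11,11,5) = 6826`,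
and `mult(11,14,7) = 44258`. -/
theorem mult_values_F :
    KacMoody.mult AF ![7, 7, 2] = 56 ∧
    KacMoody.mult AF ![8, 10, 4] = 792 ∧
    KacMoody.mult AF ![10, 10, 5] = 2434 ∧
    KacMoody.mult AF ![11, 11, 5] = 6826 ∧
    KacMoody.mult AF ![11, 14, 7] = 44258 := by
  open KacMoody in
  exact ⟨(mult_root (s := (7, 7, 2)) (by decide) (by decide)).trans (by decide +kernel),
    (mult_root (s := (8, 10, 4)) (by decide) (by decide)).trans (by decide +kernel),
    (mult_root (s := (10, 10, 5)) (by decide) (by decide)).trans (by decide +kernel),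
    (mult_root (s := (11, 11, 5)) (by decide) (by decide)).trans (by decide +kernel),
    (mult_root (s := (11, 14, 7)) (by decide) (by decide)).trans (by decide +kernel)⟩
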